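/- Let G be an abelian group, g = (g₁,…,g_m) ∈ G^m, and grade ℬ(g) and ℬ(supp(g)) by total degree |α| = Σ α_i. Let 𝒜(ℬ(supp(g))) = {a₁,…,a_n} with |a₁| ≥ |a₂| ≥ … ≥ |a_n|, and let r denote the rank of the subgroup of the ambient free abelian group generated by ℬ(supp(g)). Then c_gr(ℬ(g)) ≤ max{2|a₁|, c_gr(ℬ(supp(g)))}, and c_gr(ℬ(supp(g))) ≤ Σ_{i=1}^{min(n, r+1)} |a_i| − r. -/

import Mathlib

/-! Write `s` for an element of `ℬ(supp g)` and `D` for the second bound.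

*The bound for `ℬ(supp g)`.* By induction on `|s|`, any two factorizations of `s` are connected by
steps of cost at most `D`. If `|s| ≤ D` one step suffices. In general, two factorizations with a
common atom are connected by induction. Suppose that `α` and `γ` are factorizations of `s` that are
not connected, and let `A` (resp. `B`) be the set of atoms occurring in factorizations connected
(resp. not connected) to `α`. Consider the polyhedron `Q` of all real `e ≥ 0` with `∑ e_a a = s`.
Block monoids of groups are saturated, so atoms `a`, `b` with `e_a, e_b ≥ 1` for a point `e` of `Q`
occur together in a factorization of `s`; hence each point of `Q` with some coordinate at least `1`
is of kind `A` or of kind `B`, but not both. There are vertices of `Q` of both kinds or vertices with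
all coordinates less than `1`. As the edge graph is connected (in the form of a simplex pivoting
argument), there is a point `e` on a vertex or an edge with all coordinates less than `1`
(`exists_small_rep`). Its support contains an independent set `T` of atoms and at most one further
atom, so it has at most `r + 1` elements. As `s = ∑ e_a a` with all `e_a < 1`, the sum of the atoms
in the support exceeds `s` by at least `1` at every group element it involves, and there are at least
`#T` of these (`degree_bound`). Padding with further atoms if the support is small, this gives
`|s| ≤ D`, a contradiction. If `n ≤ r`, factorization is unique.

*The bound for `ℬ(g)`.* Summing the exponents of equal entries of `g` defines a degree preserving
homomorphism `ℬ(g) → ℬ(supp g)` along which decompositions, hence atoms, factorizations and steps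
between factorizations, lift without increasing the cost (`exists_lift_conn`). Two factorizations of
the same element with the same image are connected by swapping, between two atoms, one unit at an
index `p` for one unit at an index `q` with `g p = g q`; such a step costs at most `2 |a₁|`
(`conn_of_pushF_eq`). -/

/-! ## Common definitions: atoms, factorizations, catenary degrees -/

/-- An atom of an additive commutative monoid: a nonzero element that cannot be
written as a sum of two nonzero elements. -/
def IsAtm {S : Type*} [AddCommMonoid S] (a : S) : Prop :=
  a ≠ 0 ∧ ∀ b c : S, a = b + c → b = 0 ∨ c = 0

/-- The set of atoms of an additive commutative monoid. -/
def Atoms (S : Type*) [AddCommMonoid S] : Set S := {a | IsAtm a}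

/-- Exponent vectors: the free commutative monoid on the set of atoms (written additively). -/
abbrev FreeExp (S : Type*) [AddCommMonoid S] := ↥(Atoms S) →₀ ℕ

/-- The factorization homomorphism, sending an exponent vector `α` to `a^α ∈ S`. -/
def fac {S : Type*} [AddCommMonoid S] (α : FreeExp S) : S :=
  α.sum fun a n => n • (a : S)

lemma fac_add {S : Type*} [AddCommMonoid S] (α β : FreeExp S) :
    fac (α + β) = fac α + fac β :=
  Finsupp.sum_add_index' (fun _ => zero_nsmul _) (fun a m n => add_nsmul (a : S) m n)

/-- Total degree (length) `|α|` of an exponent vector. -/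
def degE {σ : Type*} (α : σ →₀ ℕ) : ℕ := α.sum fun _ n => n

/-- Pointwise minimum (the gcd in the free commutative monoid). -/
noncomputable def gcdE {σ : Type*} (α β : σ →₀ ℕ) : σ →₀ ℕ :=
  Finsupp.zipWith min (min_self 0) α β

/-- The distance `d(α,γ)` between two exponent vectors. -/
noncomputable def dDist {σ : Type*} (α β : σ →₀ ℕ) : ℕ :=
  max (degE (α - gcdE α β)) (degE (β - gcdE α β))

/-- `α` and `γ` can be connected by a `d`-chain. -/
def ChainConn {S : Type*} [AddCommMonoid S] (d : ℕ) (α γ : FreeExp S) : Prop :=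
  ∃ (k : ℕ) (c : ℕ → FreeExp S), c 0 = α ∧ c k = γ ∧
    ∀ j < k, fac (c j) = fac (c (j + 1)) ∧ dDist (c j) (c (j + 1)) ≤ d

/-- The catenary degree of `S`. -/
noncomputable def catDeg (S : Type*) [AddCommMonoid S] : ℕ :=
  sInf {d | ∀ α γ : FreeExp S, fac α = fac γ → ChainConn d α γ}

/-- Graded degree `|α|_gr` of an exponent vector, w.r.t. a weight (grading) `w` on `S`. -/
def gdegE {S : Type*} [AddCommMonoid S] (w : S → ℕ) (α : FreeExp S) : ℕ :=
  α.sum fun a n => n * w (a : S)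

/-- The graded distance `d_gr(α,γ)`. -/
noncomputable def dDistGr {S : Type*} [AddCommMonoid S] (w : S → ℕ) (α β : FreeExp S) : ℕ :=
  max (gdegE w (α - gcdE α β)) (gdegE w (β - gcdE α β))

/-- `α` and `γ` can be connected by a chain of weight at most `d`. -/
def ChainConnGr {S : Type*} [AddCommMonoid S] (w : S → ℕ) (d : ℕ) (α γ : FreeExp S) : Prop :=
  ∃ (k : ℕ) (c : ℕ → FreeExp S), c 0 = α ∧ c k = γ ∧
    ∀ j < k, fac (c j) = fac (c (j + 1)) ∧ dDistGr w (c j) (c (j + 1)) ≤ d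

/-- The graded catenary degree of `S` w.r.t. the grading `w`. -/
noncomputable def catDegGr (S : Type*) [AddCommMonoid S] (w : S → ℕ) : ℕ :=
  sInf {d | ∀ α γ : FreeExp S, fac α = fac γ → ChainConnGr w d α γ}

/-- The defining congruence `∼_S` of `S` on the free commutative monoid on the atoms. -/
def defCon (S : Type*) [AddCommMonoid S] : AddCon (FreeExp S) where
  r α β := fac α = fac β
  iseqv := ⟨fun _ => rfl, Eq.symm, Eq.trans⟩
  add' := fun {a b c d} h1 h2 => by
    have h1' : fac a = fac b := h1
    have h2' : fac c = fac d := h2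
    show fac (a + c) = fac (b + d)
    rw [fac_add, fac_add, h1', h2']

/-- A reduced affine monoid: commutative, cancellative, a finitely generated monoid embedding
into a finitely generated free abelian group, whose only unit is the identity. -/
class IsReducedAffine (S : Type*) [AddCommMonoid S] : Prop where
  cancel : ∀ a b c : S, a + b = a + c → b = c
  affine : ∃ (k : ℕ) (f : S →+ (Fin k → ℤ)), Function.Injective f
  fg : AddMonoid.FG S
  reduced : ∀ s : S, IsAddUnit s → s = 0

/-! ## The tilde construction -/

/-- The atoms of `S̃`: pairs `a[i]` with `a` an atom of `S` and `0 ≤ i ≤ |a|`. -/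
def ATil (S : Type*) [AddCommMonoid S] (w : S → ℕ) : Type _ :=
  {p : ↥(Atoms S) × ℕ // p.2 ≤ w (p.1 : S)}

/-- Constructor `a[i]` for atoms of `S̃`. -/
def atil {S : Type*} [AddCommMonoid S] (w : S → ℕ) (a : ↥(Atoms S)) (i : ℕ)
    (h : i ≤ w (a : S)) : ATil S w := ⟨(a, i), h⟩

/-- The map `κ : ℕ₀^{𝒜(S̃)} → ℕ₀^{𝒜(S)}`, `κ(λ)(a) = Σ_i λ(a[i])`. -/
noncomputable def kap (S : Type*) [AddCommMonoid S] (w : S → ℕ) :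
    (ATil S w →₀ ℕ) → FreeExp S :=
  Finsupp.mapDomain fun p => p.val.1

/-- The map `δ : ℕ₀^{𝒜(S̃)} → ℕ₀`, `δ(λ) = Σ i·λ(a[i])`. -/
def delt {S : Type*} [AddCommMonoid S] (w : S → ℕ) (l : ATil S w →₀ ℕ) : ℕ :=
  l.sum fun p n => n * p.val.2

lemma kap_add {S : Type*} [AddCommMonoid S] (w : S → ℕ) (l m : ATil S w →₀ ℕ) :
    kap S w (l + m) = kap S w l + kap S w m := Finsupp.mapDomain_add

lemma delt_add {S : Type*} [AddCommMonoid S] (w : S → ℕ) (l m : ATil S w →₀ ℕ) :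
    delt w (l + m) = delt w l + delt w m :=
  Finsupp.sum_add_index' (fun _ => zero_mul _) (fun _ m n => add_mul m n _)

/-- The defining congruence of `S̃` (under the identification `𝒜(S̃) = {a[i]}`,
`x^λ ∼_{S̃} x^μ` iff `a^{κλ} = a^{κμ}` in `S` and `δλ = δμ`). -/
def defConTil (S : Type*) [AddCommMonoid S] (w : S → ℕ) : AddCon (ATil S w →₀ ℕ) where
  r l m := fac (kap S w l) = fac (kap S w m) ∧ delt w l = delt w m
  iseqv := ⟨fun _ => ⟨rfl, rfl⟩, fun h => ⟨h.1.symm, h.2.symm⟩,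
    fun h h' => ⟨h.1.trans h'.1, h.2.trans h'.2⟩⟩
  add' := fun h1 h2 =>
    ⟨by rw [kap_add, kap_add, fac_add, fac_add, h1.1, h2.1],
     by rw [delt_add, delt_add, h1.2, h2.2]⟩

/-- The quadratic relations `(x_{a[k]} x_{b[l]}, x_{a[k+1]} x_{b[l-1]})`,
for `a, b ∈ 𝒜(S)`, `0 ≤ k ≤ |a| - 1`, `1 ≤ l ≤ |b|`. -/
def quadRel (S : Type*) [AddCommMonoid S] (w : S → ℕ) :
    (ATil S w →₀ ℕ) → (ATil S w →₀ ℕ) → Prop := fun x y =>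
  ∃ (a b : ↥(Atoms S)) (k l : ℕ) (hk : k + 1 ≤ w (a : S)) (_ : 1 ≤ l) (hl : l ≤ w (b : S)),
    x = Finsupp.single (atil w a k (Nat.le_of_succ_le hk)) 1 +
        Finsupp.single (atil w b l hl) 1 ∧
    y = Finsupp.single (atil w a (k + 1) hk) 1 +
        Finsupp.single (atil w b (l - 1) (le_trans (Nat.sub_le l 1) hl)) 1

/-! ## Block monoids -/

/-- The block monoid `ℬ(g)` of a tuple `g = (g₁,…,g_m)` of elements of a commutative
monoid `G`. -/
def BlockT {G : Type*} [CommMonoid G] {m : ℕ} (g : Fin m → G) :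
    AddSubmonoid (Fin m → ℕ) where
  carrier := {α | ∏ i, g i ^ α i = 1}
  zero_mem' := by simp
  add_mem' := by
    intro a b ha hb
    simp only [Set.mem_setOf_eq] at *
    show ∏ i, g i ^ (a i + b i) = 1
    simp [pow_add, Finset.prod_mul_distrib, ha, hb]

/-- The block monoid `ℬ(G₀)` of a subset `G₀` of a commutative monoid `G`. -/
noncomputable def BlockS {G : Type*} [CommMonoid G] (G₀ : Set G) : AddSubmonoid (G₀ →₀ ℕ) where
  carrier := {α | (α.prod fun x n => (x : G) ^ n) = 1}
  zero_mem' := by simp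
  add_mem' := by
    intro a b ha hb
    simp only [Set.mem_setOf_eq] at *
    rw [Finsupp.prod_add_index' (fun x => pow_zero _) (fun x m n => pow_add _ m n), ha, hb,
      one_mul]

/-- The monoid `S̃` for `S = ℬ(g)` graded by the last coordinate. -/
def TildeB {G : Type*} [CommMonoid G] {m : ℕ} (g : Fin (m + 1) → G) :
    AddSubmonoid ((Fin (m + 1) → ℕ) × ℕ) where
  carrier := {p | p.1 ∈ BlockT g ∧ p.2 ≤ p.1 (Fin.last m)}
  zero_mem' := ⟨(BlockT g).zero_mem, le_rfl⟩
  add_mem' := by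
    intro a b ha hb
    exact ⟨(BlockT g).add_mem ha.1 hb.1, add_le_add ha.2 hb.2⟩

/-- The Davenport constant `D(G₀)`: the maximal length of an atom of `ℬ(G₀)`. -/
noncomputable def DavenportC {G : Type*} [CommMonoid G] (G₀ : Set G) : ℕ :=
  sSup {k | ∃ γ : ↥(BlockS G₀), IsAtm γ ∧ degE (γ : G₀ →₀ ℕ) = k}

/-- The little Davenport constant `d(G₀)`: the maximal length of a sequence over `G₀`
containing no product-one subsequence. -/
noncomputable def littleDav {G : Type*} [CommMonoid G] (G₀ : Set G) : ℕ :=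
  sSup {k | ∃ α : G₀ →₀ ℕ, degE α = k ∧
    ∀ γ : ↥(BlockS G₀), IsAtm γ → ∃ x : G₀, α x < (γ : G₀ →₀ ℕ) x}

/-! ## Gröbner systems -/

/-- An admissible total order (given as a strict order relation) on a free commutative
monoid, written additively. -/
def IsAdmissible {F : Type*} [AddCommMonoid F] (lt : F → F → Prop) : Prop :=
  (∀ x y, lt x y ∨ x = y ∨ lt y x) ∧ (∀ x y z, lt x y → lt y z → lt x z) ∧
  (∀ x, ¬ lt x x) ∧ (∀ x y z, lt x y → lt (x + z) (y + z)) ∧ (∀ x, x ≠ 0 → lt 0 x)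

/-- `Λ` is a Gröbner system of the congruence `c` with respect to the order `lt`. -/
def IsGroebnerSystem {F : Type*} [AddCommMonoid F] (lt : F → F → Prop) (c : AddCon F)
    (Λ : Set (F × F)) : Prop :=
  Λ.Finite ∧ (∀ p ∈ Λ, c p.1 p.2 ∧ lt p.2 p.1) ∧
  (∀ z : F, (∀ p ∈ Λ, ¬ ∃ u, z = p.1 + u) → ∀ y, c z y → z = y ∨ lt z y)

/-- The ordering on positions `a[i]` induced by an enumeration of the atoms. -/
def posLt {S : Type*} [AddCommMonoid S] {w : S → ℕ} {n : ℕ} (e : Fin n ≃ ↥(Atoms S))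
    (q p : ATil S w) : Prop :=
  e.symm q.val.1 < e.symm p.val.1 ∨ (e.symm q.val.1 = e.symm p.val.1 ∧ q.val.2 < p.val.2)

/-- The admissible order on the free commutative monoid on `𝒜(S̃)` extending the order
`lt` on the free commutative monoid on `𝒜(S)`. -/
def ltTil {S : Type*} [AddCommMonoid S] (w : S → ℕ) (lt : FreeExp S → FreeExp S → Prop)
    {n : ℕ} (e : Fin n ≃ ↥(Atoms S)) (mu lam : ATil S w →₀ ℕ) : Prop :=
  lt (kap S w mu) (kap S w lam) ∨
  (kap S w mu = kap S w lam ∧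
    ∃ p : ATil S w, lam p < mu p ∧ ∀ q : ATil S w, posLt e q p → mu q = lam q)

/-- The set `Γ₂` of pairs `(x_{a[i]} x_{b[j]}, x_{a[i-1]} x_{b[j+1]})` with `x_a ≺ x_b`,
`0 < i ≤ |a|`, `0 ≤ j < |b|`. -/
def Gam2 (S : Type*) [AddCommMonoid S] (w : S → ℕ) (lt : FreeExp S → FreeExp S → Prop) :
    Set ((ATil S w →₀ ℕ) × (ATil S w →₀ ℕ)) :=
  {pr | ∃ (a b : ↥(Atoms S)) (i j : ℕ) (_ : 0 < i) (hi : i ≤ w (a : S)) (hj : j + 1 ≤ w (b : S)),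
    lt (Finsupp.single a 1) (Finsupp.single b 1) ∧
    pr = (Finsupp.single (atil w a i hi) 1 +
            Finsupp.single (atil w b j (Nat.le_of_succ_le hj)) 1,
          Finsupp.single (atil w a (i - 1) (le_trans (Nat.sub_le i 1) hi)) 1 +
            Finsupp.single (atil w b (j + 1) hj) 1)}

/-- The set `Γ₃` of pairs `(x_{a[i]} x_{a[j]}, x_{a[i-1]} x_{a[j+1]})` with `0 < i ≤ j < |a|`. -/
def Gam3 (S : Type*) [AddCommMonoid S] (w : S → ℕ) :
    Set ((ATil S w →₀ ℕ) × (ATil S w →₀ ℕ)) :=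
  {pr | ∃ (a : ↥(Atoms S)) (i j : ℕ) (_ : 0 < i) (hij : i ≤ j) (hj : j + 1 ≤ w (a : S)),
    pr = (Finsupp.single (atil w a i (le_trans hij (Nat.le_of_succ_le hj))) 1 +
            Finsupp.single (atil w a j (Nat.le_of_succ_le hj)) 1,
          Finsupp.single (atil w a (i - 1)
              (le_trans (Nat.sub_le i 1) (le_trans hij (Nat.le_of_succ_le hj)))) 1 +
            Finsupp.single (atil w a (j + 1) hj) 1)}

/-! ## The presentation homomorphism for semigroup rings -/

/-- The homomorphism `π_R : R[x_a : a ∈ 𝒜(S)] → R[S]`, `x_a ↦ a`. -/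
noncomputable def piR (R : Type*) (S : Type*) [CommRing R] [AddCommMonoid S] :
    MvPolynomial ↥(Atoms S) R →ₐ[R] AddMonoidAlgebra R S :=
  MvPolynomial.aeval fun a => AddMonoidAlgebra.single (a : S) 1

/-! ### Pivoting on polyhedra `{x ≥ 0 : ∑ i, x i • c i = s}` -/

/-- The ratio test of the simplex method: moving from `x` in the direction `-w`, the constraints
`0 ≤ x i` with `P i` remain valid up to a step length `τ` at which one of them becomes tight. -/
lemma exists_ratio {ι : Type*} [Fintype ι] (P : ι → Prop) (x w : ι → ℝ)
    (hx : ∀ i, P i → 0 ≤ x i) (hw : ∃ i, P i ∧ 0 < w i) :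
    ∃ τ : ℝ, 0 ≤ τ ∧ (∀ i, P i → 0 ≤ x i - τ * w i) ∧
      ∃ i, P i ∧ 0 < w i ∧ x i - τ * w i = 0 := by
  classical
  obtain ⟨i₀, hi₀⟩ := hw
  obtain ⟨i, hi, hmin⟩ := Finset.exists_min_image
    (Finset.univ.filter fun i => P i ∧ 0 < w i) (fun i => x i / w i) ⟨i₀, by simpa using hi₀⟩
  simp only [Finset.mem_filter, Finset.mem_univ, true_and] at hi hmin
  have hτ : 0 ≤ x i / w i := div_nonneg (hx i hi.1) hi.2.le
  refine ⟨x i / w i, hτ, fun j hj => ?_, i, hi.1, hi.2, ?_⟩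
  · rcases lt_or_ge 0 (w j) with h | h
    · have := hmin j ⟨hj, h⟩
      rw [le_div_iff₀ h] at this
      linarith
    · have := hx j hj
      nlinarith
  · rw [div_mul_cancel₀ _ hi.2.ne', sub_self]

/-- Linear independence on a finite set, expressed by functions on the ambient index type. -/
lemma indep_of_kernel {ι V : Type*} [Fintype ι] [AddCommGroup V] [Module ℝ V] (c : ι → V)
    (T : Finset ι)
    (h : ∀ u : ι → ℝ, ∑ i, u i • c i = 0 → (∀ i, i ∉ T → u i = 0) → u = 0) :
    LinearIndepOn ℝ c (T : Set ι) := by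
  classical
  rw [linearIndepOn_finset_iff]
  intro f hf i hi
  have := h (fun i => if i ∈ T then f i else 0)
    (by simpa [ite_smul, Finset.sum_ite_mem] using hf) (by intro i hi; simp [hi])
  have := congrFun this i
  simpa [hi] using this

lemma kernel_of_indep {ι V : Type*} [Fintype ι] [AddCommGroup V] [Module ℝ V] (c : ι → V)
    (T : Finset ι) (h : LinearIndepOn ℝ c (T : Set ι))
    (u : ι → ℝ) (hu : ∑ i, u i • c i = 0) (hT : ∀ i, i ∉ T → u i = 0) : u = 0 := by
  classical
  rw [linearIndepOn_finset_iff] at h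
  have h1 : ∑ i ∈ T, u i • c i = 0 := by
    rw [← hu]
    exact Finset.sum_subset (Finset.subset_univ _) fun i _ hi => by simp [hT i hi]
  funext i
  by_cases hi : i ∈ T
  · exact h u h1 i hi
  · exact hT i hi

/-- The support of a real vector. -/
noncomputable def rsupp {ι : Type*} [Fintype ι] (x : ι → ℝ) : Finset ι :=
  Finset.univ.filter fun i => x i ≠ 0

lemma mem_rsupp {ι : Type*} [Fintype ι] {x : ι → ℝ} {i : ι} : i ∈ rsupp x ↔ x i ≠ 0 := by
  simp [rsupp]

lemma notMem_rsupp {ι : Type*} [Fintype ι] {x : ι → ℝ} {i : ι} : i ∉ rsupp x ↔ x i = 0 := by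
  simp [rsupp]

lemma sum_smul_add_mul {ι V : Type*} [Fintype ι] [AddCommGroup V] [Module ℝ V] (c : ι → V)
    (x w : ι → ℝ) (t : ℝ) :
    ∑ i, (x i + t * w i) • c i = ∑ i, x i • c i + t • ∑ i, w i • c i := by
  simp [add_smul, mul_smul, Finset.sum_add_distrib, Finset.smul_sum]

/-- Carathéodory reduction: a nonnegative representation can be replaced by one with
linearly independent support inside the given one. -/
lemma exists_vertex {ι V : Type*} [Fintype ι] [AddCommGroup V] [Module ℝ V] (c : ι → V) (s : V) :
    ∀ (N : ℕ) (x : ι → ℝ), (rsupp x).card ≤ N → (∀ i, 0 ≤ x i) → ∑ i, x i • c i = s →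
    ∃ y : ι → ℝ, (∀ i, 0 ≤ y i) ∧ ∑ i, y i • c i = s ∧ rsupp y ⊆ rsupp x ∧
      LinearIndepOn ℝ c (rsupp y : Set ι) := by
  intro N
  induction N with
  | zero =>
    intro x hN hx hs
    refine ⟨x, hx, hs, subset_rfl, ?_⟩
    have : rsupp x = ∅ := by simpa using hN
    simp [this]
  | succ N ih =>
    intro x hN hx hs
    by_cases hind : LinearIndepOn ℝ c (rsupp x : Set ι)
    · exact ⟨x, hx, hs, subset_rfl, hind⟩
    have hker : ∃ u : ι → ℝ, ∑ i, u i • c i = 0 ∧ (∀ i, i ∉ rsupp x → u i = 0) ∧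
        ∃ i, 0 < u i := by
      by_contra! hcon
      refine hind (indep_of_kernel c _ fun u hu hT => ?_)
      have h1 := hcon u hu hT
      have h2 := hcon (fun i => - u i) (by simp [hu]) (fun i hi => by simp [hT i hi])
      funext i
      have := h1 i
      have := h2 i
      simp only [Pi.zero_apply]
      linarith
    obtain ⟨u, hu, hT, i₀, hi₀⟩ := hker
    obtain ⟨τ, hτ, hnn, i, -, hi, hz⟩ := exists_ratio (fun _ => True) x u (fun i _ => hx i)
      ⟨i₀, trivial, hi₀⟩
    have hsub : rsupp (fun i => x i + (-τ) * u i) ⊂ rsupp x := by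
      rw [Finset.ssubset_iff_of_subset]
      · refine ⟨i, ?_, ?_⟩
        · by_contra h
          exact hi.ne' (hT i h)
        · rw [notMem_rsupp]; linarith
      · intro j hj
        by_contra h
        have h1 := hT j h
        rw [notMem_rsupp] at h
        rw [mem_rsupp] at hj
        simp [h1, h] at hj
    obtain ⟨y, h1, h2, h3, h4⟩ := ih (fun i => x i + (-τ) * u i)
      (by have := Finset.card_lt_card hsub; omega)
      (fun i => by have := hnn i trivial; linarith)
      (by rw [sum_smul_add_mul, hu, hs]; simp)
    exact ⟨y, h1, h2, h3.trans hsub.subset, h4⟩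

/-- Starting at a vertex `x` of `{x ≥ 0 : ∑ i, x i • c i = s}`, if some feasible direction
decreases the linear form `f`, then so does the direction `w` of an edge: up to scaling, `w` is the
only linear relation of the `c i` supported on the supports of `x` and `w`. The induction is on
the number of coordinates of `w` outside the support of `x`. -/
lemma exists_edge {ι V : Type*} [Fintype ι] [AddCommGroup V] [Module ℝ V] (c : ι → V)
    (x : ι → ℝ) (hx : LinearIndepOn ℝ c (rsupp x : Set ι)) (f : (ι → ℝ) →ₗ[ℝ] ℝ) [DecidableEq ι] :
    ∀ (N : ℕ) (w : ι → ℝ), (rsupp w \ rsupp x).card ≤ N → ∑ i, w i • c i = 0 →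
    (∀ i, i ∉ rsupp x → 0 ≤ w i) → f w < 0 →
    ∃ w : ι → ℝ, ∑ i, w i • c i = 0 ∧ (∀ i, i ∉ rsupp x → 0 ≤ w i) ∧ f w < 0 ∧
      ∀ u : ι → ℝ, ∑ i, u i • c i = 0 → (∀ i, i ∉ rsupp x ∪ rsupp w → u i = 0) →
        ∃ a : ℝ, u = a • w := by
  intro N
  induction N with
  | zero =>
    intro w hN hw _ hfw
    rw [Nat.le_zero, Finset.card_eq_zero, Finset.sdiff_eq_empty_iff_subset] at hN
    have h0 := kernel_of_indep c _ hx w hw fun i hi => by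
      by_contra h
      exact hi (hN (mem_rsupp.2 h))
    simp [h0] at hfw
  | succ N ih =>
    intro w hN hw hnn hfw
    by_cases hedge : ∀ u : ι → ℝ, ∑ i, u i • c i = 0 →
        (∀ i, i ∉ rsupp x ∪ rsupp w → u i = 0) → f u = 0 → u = 0
    · refine ⟨w, hw, hnn, hfw, fun u hu hT => ⟨f u / f w, ?_⟩⟩
      have := hedge (fun i => u i + (-(f u / f w)) * w i)
        (by rw [sum_smul_add_mul, hu, hw]; simp)
        (fun i hi => by
          have h1 := hT i hi
          have h2 : w i = 0 := by
            rw [← notMem_rsupp]; intro h; exact hi (Finset.mem_union_right _ h)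
          simp [h1, h2])
        (by
          have : (fun i => u i + (-(f u / f w)) * w i) = u + (-(f u / f w)) • w := rfl
          rw [this, map_add, map_smul, smul_eq_mul]
          field_simp [hfw.ne]
          ring)
      funext i
      have := congrFun this i
      simp only [Pi.zero_apply, Pi.smul_apply, smul_eq_mul] at *
      linarith
    · have hex : ∃ u : ι → ℝ, ∑ i, u i • c i = 0 ∧
          (∀ i, i ∉ rsupp x ∪ rsupp w → u i = 0) ∧ f u = 0 ∧ ∃ i, i ∉ rsupp x ∧ 0 < u i := by
        by_contra! hcon
        refine hedge fun u hu hT hfu => kernel_of_indep c _ hx u hu fun i hi => ?_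
        have h1 := hcon u hu hT hfu i hi
        have h2 := hcon (-u) (by simp [hu]) (fun i hi => by simp [hT i hi]) (by simp [hfu]) i hi
        simp only [Pi.neg_apply] at h2
        linarith
      obtain ⟨u, hu, hT, hfu, i₀, hi₀⟩ := hex
      obtain ⟨τ, hτ, hnn', i, hix, hi, hz⟩ := exists_ratio (fun i => i ∉ rsupp x) w u hnn
        ⟨i₀, hi₀⟩
      have hsub : rsupp (fun i => w i + (-τ) * u i) \ rsupp x ⊂ rsupp w \ rsupp x := by
        rw [Finset.ssubset_iff_of_subset]
        · refine ⟨i, ?_, ?_⟩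
          · rw [Finset.mem_sdiff]
            refine ⟨?_, hix⟩
            by_contra h
            exact hi.ne' (hT i (by simp [h, hix]))
          · rw [Finset.mem_sdiff, not_and_or]; left
            rw [notMem_rsupp]; linarith
        · intro j hj
          rw [Finset.mem_sdiff] at hj ⊢
          refine ⟨?_, hj.2⟩
          by_contra h
          have h1 := hT j (by simp [h, hj.2])
          rw [notMem_rsupp] at h
          have := hj.1
          rw [mem_rsupp] at this
          simp [h1, h] at this
      refine ih (fun i => w i + (-τ) * u i)
        (by have := Finset.card_lt_card hsub; omega)
        (by rw [sum_smul_add_mul, hu, hw]; simp)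
        (fun i hi => by have := hnn' i hi; linarith) ?_
      have : (fun i => w i + (-τ) * u i) = w + (-τ) • u := rfl
      rw [this, map_add, map_smul, hfu]
      simpa using hfw

/-- Let `Q = {e ≥ 0 : ∑ i, e i • c i = s}`. Suppose that every coordinate at least `1` of a point
of `Q` has its index in `A` or `B`, that no point of `Q` has such coordinates of both kinds, and
that `Q` has points supported on `A` and on `B`. Then `Q` has a point with all coordinates less
than `1` whose support is, up to one element, linearly independent.

Otherwise all points on the vertices and edges of `Q` are of exactly one of the kinds `A` and `B`,
both kinds are closed conditions and edges are connected, so the kind is constant along edges; but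
the simplex method leads along edges from a vertex of kind `A` to one of kind `B`. -/
lemma exists_small_rep {ι V : Type*} [Fintype ι] [AddCommGroup V] [Module ℝ V] (c : ι → V)
    (s : V) (A B : Set ι)
    (x₀ y₀ : ι → ℝ) (hx₀ : ∀ i, 0 ≤ x₀ i) (hy₀ : ∀ i, 0 ≤ y₀ i)
    (hx₀s : ∑ i, x₀ i • c i = s) (hy₀s : ∑ i, y₀ i • c i = s)
    (hx₀A : ∀ i, x₀ i ≠ 0 → i ∈ A) (hy₀B : ∀ i, y₀ i ≠ 0 → i ∈ B)
    (hcov : ∀ e : ι → ℝ, (∀ i, 0 ≤ e i) → ∑ i, e i • c i = s → ∀ i, 1 ≤ e i → i ∈ A ∨ i ∈ B)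
    (hsep : ∀ e : ι → ℝ, (∀ i, 0 ≤ e i) → ∑ i, e i • c i = s →
      ∀ i ∈ A, ∀ j ∈ B, 1 ≤ e i → 1 ≤ e j → False) :
    ∃ e : ι → ℝ, (∀ i, 0 ≤ e i) ∧ ∑ i, e i • c i = s ∧ (∀ i, e i < 1) ∧
      ∃ T : Finset ι, T ⊆ rsupp e ∧ LinearIndepOn ℝ c (T : Set ι) ∧
        (rsupp e).card ≤ T.card + 1 := by
  classical
  by_contra! hcon
  have hvert : ∀ v : ι → ℝ, (∀ i, 0 ≤ v i) → ∑ i, v i • c i = s →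
      LinearIndepOn ℝ c (rsupp v : Set ι) → ∃ i, 1 ≤ v i := by
    intro v hv hvs hvi
    by_contra! hlt
    have := hcon v hv hvs hlt (rsupp v) subset_rfl hvi
    omega
  -- `x₁` is a vertex of kind `A` and `y` is a vertex of kind `B`.
  obtain ⟨y, hy, hys, hysub, hyi⟩ := exists_vertex c s _ y₀ le_rfl hy₀ hy₀s
  obtain ⟨x₁, hx₁, hx₁s, hx₁sub, hx₁i⟩ := exists_vertex c s _ x₀ le_rfl hx₀ hx₀s
  have hyB : ∃ i ∈ B, 1 ≤ y i := by
    obtain ⟨i, hi⟩ := hvert y hy hys hyi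
    exact ⟨i, hy₀B i (mem_rsupp.1 (hysub (mem_rsupp.2 (by linarith)))), hi⟩
  have hx₁A : ∃ i ∈ A, 1 ≤ x₁ i := by
    obtain ⟨i, hi⟩ := hvert x₁ hx₁ hx₁s hx₁i
    exact ⟨i, hx₀A i (mem_rsupp.1 (hx₁sub (mem_rsupp.2 (by linarith)))), hi⟩
  -- `f` is nonnegative on the polyhedron and vanishes there only at the vertex `y`.
  let f : (ι → ℝ) →ₗ[ℝ] ℝ := ∑ i ∈ Finset.univ.filter (fun i => i ∉ rsupp y), LinearMap.proj i
  have hf : ∀ e, f e = ∑ i ∈ Finset.univ.filter (fun i => i ∉ rsupp y), e i := by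
    intro e; simp [f]
  have hfin : {v : ι → ℝ | (∀ i, 0 ≤ v i) ∧ ∑ i, v i • c i = s ∧
      LinearIndepOn ℝ c (rsupp v : Set ι) ∧ ∃ i ∈ A, 1 ≤ v i}.Finite := by
    refine Set.Finite.of_finite_image (f := rsupp) (Set.toFinite _) ?_
    rintro v ⟨-, hv, hvi, -⟩ v' ⟨-, hv', -, -⟩ heq
    have := kernel_of_indep c _ hvi (fun i => v i + (-1) * v' i)
      (by rw [sum_smul_add_mul, hv, hv']; simp)
      (fun i hi => by
        have h1 := notMem_rsupp.1 hi
        have h2 := notMem_rsupp.1 (heq ▸ hi)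
        simp [h1, h2])
    funext i
    have := congrFun this i
    simp only [Pi.zero_apply] at this
    linarith
  -- A vertex has independent support, hence is determined by it, so there are finitely many;
  -- let `x` be a vertex of kind `A` with minimal `f`. An edge leaving `x` that decreases `f`
  -- must end in kind `B`.
  obtain ⟨x, ⟨hx, hxs, hxi, hxA⟩, hxmin⟩ := Set.exists_min_image _ f hfin
    ⟨x₁, hx₁, hx₁s, hx₁i, hx₁A⟩
  have hfx : 0 < f x := by
    have h0 : 0 ≤ f x := by rw [hf]; exact Finset.sum_nonneg fun i _ => hx i
    refine lt_of_le_of_ne h0 fun h => ?_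
    rw [hf, eq_comm, Finset.sum_eq_zero_iff_of_nonneg (fun i _ => hx i)] at h
    have := kernel_of_indep c _ hyi (fun i => x i + (-1) * y i)
      (by rw [sum_smul_add_mul, hxs, hys]; simp)
      (fun i hi => by
        have h1 := h i (by simpa using hi)
        have h2 := notMem_rsupp.1 hi
        simp [h1, h2])
    obtain ⟨i, hiA, hi⟩ := hxA
    obtain ⟨j, hjB, hj⟩ := hyB
    have h1 := congrFun this j
    simp only [Pi.zero_apply] at h1
    exact hsep x hx hxs i hiA j hjB hi (by linarith)
  have hfy : f y = 0 := by
    rw [hf]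
    exact Finset.sum_eq_zero fun i hi => by
      simpa [notMem_rsupp] using hi
  obtain ⟨w, hw, hwnn, hfw, hedge⟩ := exists_edge c x hxi f _ (fun i => y i + (-1) * x i) le_rfl
    (by rw [sum_smul_add_mul, hxs, hys]; simp)
    (fun i hi => by have h1 := notMem_rsupp.1 hi; simp [h1, hy i])
    (by
      have : (fun i => y i + (-1) * x i) = y + (-1 : ℝ) • x := rfl
      rw [this, map_add, map_smul, hfy]
      simpa using hfx)
  -- The edge is bounded because `f` is nonnegative; it ends at `x + τ w`, where the coordinate
  -- `p` vanishes.
  have hneg : ∃ i, w i < 0 := by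
    by_contra! h
    rw [hf] at hfw
    exact absurd (Finset.sum_nonneg fun i _ => h i) (not_le.2 hfw)
  obtain ⟨τ, hτ, hτnn, p, -, hp, hpz⟩ := exists_ratio (fun _ => True) x (fun i => - w i)
    (fun i _ => hx i) (by simpa using hneg)
  have hpne : w p ≠ 0 := by intro h; simp [h] at hp
  have hτpos : 0 < τ := by
    refine lt_of_le_of_ne hτ fun h => ?_
    rw [← h] at hpz
    have h1 : p ∉ rsupp x := notMem_rsupp.2 (by linarith)
    have := hwnn p h1
    linarith
  -- Relations supported on the edge are multiples of `w` and `w p ≠ 0`, so deleting `p` gives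
  -- an independent set.
  have hWind : ∀ T : Finset ι, T ⊆ rsupp x ∪ rsupp w → p ∉ T →
      LinearIndepOn ℝ c (T : Set ι) := by
    intro T hT hpT
    refine indep_of_kernel c T fun u hu huT => ?_
    obtain ⟨a, rfl⟩ := hedge u hu fun i hi => huT i fun h => hi (hT h)
    have := huT p hpT
    simp only [Pi.smul_apply, smul_eq_mul, mul_eq_zero, hpne, or_false] at this
    simp [this]
  have hpt : ∀ t ∈ Set.Icc 0 τ, (∀ i, 0 ≤ x i + t * w i) ∧
      ∑ i, (x i + t * w i) • c i = s ∧ rsupp (fun i => x i + t * w i) ⊆ rsupp x ∪ rsupp w := by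
    rintro t ⟨ht0, htτ⟩
    refine ⟨fun i => ?_, ?_, fun i hi => ?_⟩
    · have h1 := hτnn i trivial
      have h2 := hx i
      rcases le_or_gt 0 (w i) with h | h
      · nlinarith
      · nlinarith
    · rw [sum_smul_add_mul, hw, hxs]; simp
    · by_contra h
      simp only [Finset.mem_union, not_or, notMem_rsupp] at h
      rw [mem_rsupp] at hi
      simp [h.1, h.2] at hi
  have htype : ∀ t ∈ Set.Icc 0 τ, ∃ i, 1 ≤ x i + t * w i := by
    intro t ht
    obtain ⟨h1, h2, h3⟩ := hpt t ht
    by_contra! hlt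
    have := hcon _ h1 h2 hlt ((rsupp (fun i => x i + t * w i)).erase p)
      (Finset.erase_subset _ _)
      (hWind _ ((Finset.erase_subset _ _).trans h3) (Finset.notMem_erase _ _))
    have := Finset.pred_card_le_card_erase (s := rsupp (fun i => x i + t * w i)) (a := p)
    omega
  have hend : ∃ i ∈ B, 1 ≤ x i + τ * w i := by
    have hτm : τ ∈ Set.Icc 0 τ := ⟨hτ, le_rfl⟩
    obtain ⟨h1, h2, h3⟩ := hpt τ hτm
    obtain ⟨i, hi⟩ := htype τ hτm
    rcases hcov _ h1 h2 i hi with hA | hB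
    · exfalso
      have := hxmin (fun i => x i + τ * w i) ⟨h1, h2, hWind _ h3
        (by rw [notMem_rsupp]; linarith), i, hA, hi⟩
      have h5 : (fun i => x i + τ * w i) = x + τ • w := rfl
      rw [h5, map_add, map_smul, smul_eq_mul] at this
      nlinarith
    · exact ⟨i, hB, hi⟩
  -- The edge `[0, τ]` is covered by two disjoint nonempty closed sets, which is absurd.
  have hclosed : ∀ C : Set ι, IsClosed {t : ℝ | ∃ i ∈ C, 1 ≤ x i + t * w i} := by
    intro C
    have : {t : ℝ | ∃ i ∈ C, 1 ≤ x i + t * w i} = ⋃ i ∈ C, {t : ℝ | 1 ≤ x i + t * w i} := by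
      ext t; simp
    rw [this]
    exact Set.Finite.isClosed_biUnion (Set.toFinite C) fun i _ =>
      isClosed_le continuous_const (by fun_prop)
  obtain ⟨t, ht, ⟨i, hiA, hi⟩, j, hjB, hj⟩ := isPreconnected_closed_iff.1
    (isPreconnected_Icc (a := (0 : ℝ)) (b := τ)) _ _ (hclosed A) (hclosed B)
    (fun t ht => by
      obtain ⟨h1, h2, -⟩ := hpt t ht
      obtain ⟨i, hi⟩ := htype t ht
      rcases hcov _ h1 h2 i hi with h | h
      · exact Or.inl ⟨i, h, hi⟩
      · exact Or.inr ⟨i, h, hi⟩)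
    ⟨0, ⟨le_rfl, hτ⟩, by simpa using hxA⟩ ⟨τ, ⟨hτ, le_rfl⟩, hend⟩
  obtain ⟨h1, h2, -⟩ := hpt t ht
  exact hsep _ h1 h2 i hiA j hjB hi hj

/-! ### Chains of factorizations -/

/-- One step of a chain of factorizations of cost at most `d` with respect to `w`. -/
def ChainStep {S : Type*} [AddCommMonoid S] (w : S → ℕ) (d : ℕ) (α γ : FreeExp S) : Prop :=
  fac α = fac γ ∧ dDistGr w α γ ≤ d

/-- Connectedness by chains, as the reflexive transitive closure of `ChainStep`; equivalent to
`ChainConnGr` by `chainConnGr_iff`. -/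
abbrev Conn {S : Type*} [AddCommMonoid S] (w : S → ℕ) (d : ℕ) : FreeExp S → FreeExp S → Prop :=
  Relation.ReflTransGen (ChainStep w d)

section chains

variable {S : Type*} [AddCommMonoid S] {w : S → ℕ} {d : ℕ}

lemma chainConnGr_iff {α γ : FreeExp S} : ChainConnGr w d α γ ↔ Conn w d α γ := by
  constructor
  · rintro ⟨k, c, rfl, rfl, h⟩
    induction k with
    | zero => exact Relation.ReflTransGen.refl
    | succ k ih => exact (ih fun j hj => h j (by omega)).tail (h k (by omega))
  · intro h
    induction h with
    | refl => exact ⟨0, fun _ => α, rfl, rfl, by simp⟩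
    | @tail β γ _ hstep ih =>
      obtain ⟨k, c, h0, hk, h⟩ := ih
      refine ⟨k + 1, fun j => if j ≤ k then c j else γ, by simp [h0], by simp, fun j hj => ?_⟩
      rcases Nat.lt_succ_iff_lt_or_eq.1 hj with hj' | rfl
      · have h1 : j ≤ k := by omega
        have h2 : j + 1 ≤ k := by omega
        simpa [h1, h2] using h j hj'
      · simpa [hk, ChainStep] using hstep

lemma gcdE_apply {σ : Type*} (α β : σ →₀ ℕ) (i : σ) : gcdE α β i = min (α i) (β i) := by
  simp [gcdE]

lemma gcdE_comm {σ : Type*} (α β : σ →₀ ℕ) : gcdE α β = gcdE β α := by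
  ext i; simp [gcdE_apply, min_comm]

lemma gdegE_add (w : S → ℕ) (α β : FreeExp S) : gdegE w (α + β) = gdegE w α + gdegE w β :=
  Finsupp.sum_add_index' (fun _ => zero_mul _) (fun _ _ _ => add_mul _ _ _)

lemma gdegE_single (w : S → ℕ) (a : ↥(Atoms S)) : gdegE w (Finsupp.single a 1) = w a := by
  simp [gdegE]

lemma fac_single (a : ↥(Atoms S)) : fac (Finsupp.single a 1) = (a : S) := by
  simp [fac]

lemma fac_zero : fac (0 : FreeExp S) = 0 := by
  simp [fac]

lemma gdegE_mono {α β : FreeExp S} (h : α ≤ β) : gdegE w α ≤ gdegE w β := by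
  obtain ⟨γ, rfl⟩ := exists_add_of_le h
  rw [gdegE_add]; omega

lemma ChainStep.symm {α γ : FreeExp S} (h : ChainStep w d α γ) : ChainStep w d γ α :=
  ⟨h.1.symm, by rw [dDistGr, gcdE_comm, max_comm]; exact h.2⟩

lemma Conn.symm {α γ : FreeExp S} (h : Conn w d α γ) : Conn w d γ α :=
  haveI : Std.Symm (ChainStep w d) := ⟨fun _ _ => ChainStep.symm⟩
  Relation.ReflTransGen.stdSymm.symm _ _ h

lemma Conn.fac_eq {α γ : FreeExp S} (h : Conn w d α γ) : fac α = fac γ := by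
  induction h with
  | refl => rfl
  | tail _ hs ih => exact ih.trans hs.1

/-- A step replacing `α` by `γ` next to a common part `δ` costs at most the degrees of
`α` and `γ`. -/
lemma chainStep_add (δ : FreeExp S) {α γ : FreeExp S} (h : fac α = fac γ)
    (hα : gdegE w α ≤ d) (hγ : gdegE w γ ≤ d) : ChainStep w d (δ + α) (δ + γ) := by
  refine ⟨by rw [fac_add, fac_add, h], max_le ?_ ?_⟩
  · refine (gdegE_mono fun i => ?_).trans hα
    simp only [Finsupp.tsub_apply, gcdE_apply, Finsupp.add_apply]
    omega
  · refine (gdegE_mono fun i => ?_).trans hγ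
    simp only [Finsupp.tsub_apply, gcdE_apply, Finsupp.add_apply]
    omega

lemma ChainStep.add_left (δ : FreeExp S) {α γ : FreeExp S} (h : ChainStep w d α γ) :
    ChainStep w d (δ + α) (δ + γ) := by
  refine ⟨by rw [fac_add, fac_add, h.1], ?_⟩
  have e1 : δ + α - gcdE (δ + α) (δ + γ) = α - gcdE α γ := by
    ext i
    simp only [Finsupp.tsub_apply, gcdE_apply, Finsupp.add_apply]
    omega
  have e2 : δ + γ - gcdE (δ + α) (δ + γ) = γ - gcdE α γ := by
    ext i
    simp only [Finsupp.tsub_apply, gcdE_apply, Finsupp.add_apply]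
    omega
  rw [dDistGr, e1, e2]
  exact h.2

lemma Conn.add_left (δ : FreeExp S) {α γ : FreeExp S} (h : Conn w d α γ) :
    Conn w d (δ + α) (δ + γ) :=
  Relation.ReflTransGen.lift (δ + ·) (fun _ _ hs => ChainStep.add_left δ hs) _ _ h

lemma catDegGr_le (h : ∀ α γ : FreeExp S, fac α = fac γ → Conn w d α γ) : catDegGr S w ≤ d :=
  Nat.sInf_le fun α γ hαγ => chainConnGr_iff.2 (h α γ hαγ)

/-- The infimum defining the graded catenary degree is attained as soon as some bound exists. -/
lemma conn_catDegGr (h : ∀ α γ : FreeExp S, fac α = fac γ → Conn w d α γ)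
    (α γ : FreeExp S) (hαγ : fac α = fac γ) : Conn w (catDegGr S w) α γ := by
  have := Nat.sInf_mem (s := {d | ∀ α γ : FreeExp S, fac α = fac γ → ChainConnGr w d α γ})
    ⟨d, fun α γ hαγ => chainConnGr_iff.2 (h α γ hαγ)⟩
  exact chainConnGr_iff.1 (this α γ hαγ)

lemma exists_single_add {σ : Type*} (α : σ →₀ ℕ) {a : σ} (h : α a ≠ 0) :
    ∃ β, α = Finsupp.single a 1 + β := by
  classical
  refine exists_add_of_le (fun i => ?_)
  rw [Finsupp.single_apply]
  split_ifs with hi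
  · subst hi; omega
  · exact Nat.zero_le _

lemma exists_ne_of_ne_zero {σ : Type*} {α : σ →₀ ℕ} (h : α ≠ 0) : ∃ a, α a ≠ 0 := by
  by_contra! hc
  exact h (Finsupp.ext hc)

end chains

/-! ### Block monoids of sets: polyhedral estimates -/

section blockS

variable {G : Type*} [CommGroup G] {G₀ : Set G}

lemma degE_add {σ : Type*} (α β : σ →₀ ℕ) : degE (α + β) = degE α + degE β :=
  Finsupp.sum_add_index' (fun _ => rfl) (fun _ _ _ => rfl)

lemma degE_eq_sum {σ : Type*} [Fintype σ] (α : σ →₀ ℕ) : degE α = ∑ i, α i :=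
  Finsupp.sum_fintype _ _ fun _ => rfl

lemma degE_eq_zero {σ : Type*} {α : σ →₀ ℕ} : degE α = 0 ↔ α = 0 := by
  constructor
  · intro h
    ext i
    by_contra hi
    have := Finset.sum_eq_zero_iff.1 h i (Finsupp.mem_support_iff.2 hi)
    exact hi this
  · rintro rfl; simp [degE]

/-- Block monoids over groups are saturated. -/
lemma blockS_of_add_mem {α β : G₀ →₀ ℕ} (hα : α ∈ BlockS G₀) (h : α + β ∈ BlockS G₀) :
    β ∈ BlockS G₀ := by
  change (α.prod fun x n => (x : G) ^ n) = 1 at hα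
  change ((α + β).prod fun x n => (x : G) ^ n) = 1 at h
  rw [Finsupp.prod_add_index' (fun x => pow_zero _) (fun x m n => pow_add _ m n), hα,
    one_mul] at h
  exact h

lemma blockS_exists_sub {s t : ↥(BlockS G₀)} (h : (t : G₀ →₀ ℕ) ≤ s) :
    ∃ u : ↥(BlockS G₀), s = t + u := by
  obtain ⟨β, hβ⟩ := exists_add_of_le h
  exact ⟨⟨β, blockS_of_add_mem t.2 (hβ ▸ s.2)⟩, Subtype.ext hβ⟩

/-- The degree grading of `BlockS`. -/
abbrev wS (G₀ : Set G) : ↥(BlockS G₀) → ℕ := fun α => degE (α : G₀ →₀ ℕ)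

lemma wS_add (s t : ↥(BlockS G₀)) : wS G₀ (s + t) = wS G₀ s + wS G₀ t := degE_add _ _

lemma wS_eq_zero {s : ↥(BlockS G₀)} : wS G₀ s = 0 ↔ s = 0 := by
  rw [wS, degE_eq_zero]; simp

lemma wS_atom_pos (a : ↥(Atoms ↥(BlockS G₀))) : 0 < wS G₀ (a : ↥(BlockS G₀)) :=
  Nat.pos_of_ne_zero fun h => a.2.1 (wS_eq_zero.1 h)

/-- If only `0` has degree `0`, every element is a product of atoms, by induction on the degree. -/
lemma exists_fac_of_grading {S : Type*} [AddCommMonoid S] (w : S → ℕ)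
    (hadd : ∀ s t, w (s + t) = w s + w t) (h0 : ∀ s, w s = 0 ↔ s = 0) (s : S) :
    ∃ α : FreeExp S, fac α = s := by
  induction h : w s using Nat.strong_induction_on generalizing s with
  | _ N ih =>
    by_cases hs : s = 0
    · exact ⟨0, by rw [fac_zero, hs]⟩
    by_cases ha : IsAtm s
    · exact ⟨Finsupp.single ⟨s, ha⟩ 1, fac_single _⟩
    · have : ∃ b c, s = b + c ∧ b ≠ 0 ∧ c ≠ 0 := by
        by_contra! hc
        exact ha ⟨hs, fun b c hbc => or_iff_not_imp_left.2 (hc b c hbc)⟩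
      obtain ⟨b, c, rfl, hb, hc⟩ := this
      have hb' : w b ≠ 0 := fun h => hb ((h0 b).1 h)
      have hc' : w c ≠ 0 := fun h => hc ((h0 c).1 h)
      rw [hadd] at h
      obtain ⟨β, hβ⟩ := ih (w b) (by omega) b rfl
      obtain ⟨γ, hγ⟩ := ih (w c) (by omega) c rfl
      exact ⟨β + γ, by rw [fac_add, hβ, hγ]⟩

lemma gdegE_eq_of_grading {S : Type*} [AddCommMonoid S] (w : S → ℕ) (h0 : w 0 = 0)
    (hadd : ∀ s t, w (s + t) = w s + w t) (α : FreeExp S) : gdegE w α = w (fac α) := by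
  let W : S →+ ℕ := { toFun := w, map_zero' := h0, map_add' := hadd }
  change _ = W (fac α)
  rw [fac, map_finsuppSum]
  refine Finsupp.sum_congr fun a _ => ?_
  rw [map_nsmul, smul_eq_mul]
  rfl

lemma exists_fac (s : ↥(BlockS G₀)) : ∃ α : FreeExp ↥(BlockS G₀), fac α = s :=
  exists_fac_of_grading (wS G₀) wS_add (fun _ => wS_eq_zero) s

lemma gdegE_wS (α : FreeExp ↥(BlockS G₀)) : gdegE (wS G₀) α = wS G₀ (fac α) :=
  gdegE_eq_of_grading _ (wS_eq_zero.2 rfl) wS_add α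

lemma fac_apply (α : FreeExp ↥(BlockS G₀)) (x : G₀) :
    ((fac α : ↥(BlockS G₀)) : G₀ →₀ ℕ) x = α.sum fun a n => n * (a : G₀ →₀ ℕ) x := by
  let F : ↥(BlockS G₀) →+ ℕ := (Finsupp.applyAddHom x).comp (BlockS G₀).subtype
  change F (fac α) = _
  rw [fac, map_finsuppSum]
  simp [F]

/-- The atoms of a block monoid as real vectors. -/
def atomVec (G₀ : Set G) (a : ↥(Atoms ↥(BlockS G₀))) : G₀ → ℝ :=
  fun x => ((a : ↥(BlockS G₀)) : G₀ →₀ ℕ) x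

/-- If two factorizations of `s` are not connected although connectedness holds in smaller degrees,
then `s` has a real representation by atoms with all coefficients less than `1` and support of size
at most one more than an independent set.

Here `exists_small_rep` is applied with `A` (resp. `B`) the set of atoms occurring in factorizations
of `s` connected (resp. not connected) to `α`. -/
lemma exists_rep_of_not_conn [Fintype ↥(Atoms ↥(BlockS G₀))] (D : ℕ) (s : ↥(BlockS G₀))
    (ih : ∀ t, wS G₀ t < wS G₀ s → ∀ α γ : FreeExp ↥(BlockS G₀), fac α = t → fac γ = t →
      Conn (wS G₀) D α γ)
    (α γ : FreeExp ↥(BlockS G₀)) (hα : fac α = s) (hγ : fac γ = s)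
    (hnc : ¬ Conn (wS G₀) D α γ) :
    ∃ e : ↥(Atoms ↥(BlockS G₀)) → ℝ, (∀ i, 0 ≤ e i) ∧
      (∑ i, e i • atomVec G₀ i = fun x => (((s : G₀ →₀ ℕ) x : ℕ) : ℝ)) ∧ (∀ i, e i < 1) ∧
      ∃ T : Finset ↥(Atoms ↥(BlockS G₀)), T ⊆ rsupp e ∧
        LinearIndepOn ℝ (atomVec G₀) (T : Set ↥(Atoms ↥(BlockS G₀))) ∧
        (rsupp e).card ≤ T.card + 1 := by
  classical
  -- Factorizations of `s` with a common atom are connected: cancel the atom.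
  have hshare : ∀ β δ : FreeExp ↥(BlockS G₀), fac β = s → fac δ = s →
      ∀ a, β a ≠ 0 → δ a ≠ 0 → Conn (wS G₀) D β δ := by
    intro β δ hβ hδ a ha ha'
    obtain ⟨β', rfl⟩ := exists_single_add β ha
    obtain ⟨δ', rfl⟩ := exists_single_add δ ha'
    rw [fac_add, fac_single] at hβ hδ
    refine Conn.add_left _ (ih (fac β') ?_ β' δ' rfl ?_)
    · rw [← hβ, wS_add]
      have := wS_atom_pos a
      omega
    · have h := congrArg Subtype.val (hδ.trans hβ.symm)
      exact Subtype.ext (add_left_cancel h)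
  -- Atoms whose coefficients are at least `1` in a real representation jointly divide `s`,
  -- by saturation.
  have hle : ∀ e : ↥(Atoms ↥(BlockS G₀)) → ℝ, (∀ i, 0 ≤ e i) →
      (∑ i, e i • atomVec G₀ i = fun x => (((s : G₀ →₀ ℕ) x : ℕ) : ℝ)) →
      ∀ (Z : Finset ↥(Atoms ↥(BlockS G₀))), (∀ i ∈ Z, 1 ≤ e i) →
      ∀ x, ∑ i ∈ Z, ((i : ↥(BlockS G₀)) : G₀ →₀ ℕ) x ≤ (s : G₀ →₀ ℕ) x := by
    intro e he hes Z hZ x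
    have h1 := congrFun hes x
    simp only [Finset.sum_apply, Pi.smul_apply, smul_eq_mul, atomVec] at h1
    have : (∑ i ∈ Z, (((i : ↥(BlockS G₀)) : G₀ →₀ ℕ) x : ℝ)) ≤ ((s : G₀ →₀ ℕ) x : ℝ) := by
      rw [← h1]
      calc _ ≤ ∑ i ∈ Z, e i * (((i : ↥(BlockS G₀)) : G₀ →₀ ℕ) x : ℝ) :=
            Finset.sum_le_sum fun i hi => le_mul_of_one_le_left (Nat.cast_nonneg _) (hZ i hi)
        _ ≤ _ := Finset.sum_le_sum_of_subset_of_nonneg (Finset.subset_univ _)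
            fun i _ _ => mul_nonneg (he i) (Nat.cast_nonneg _)
    exact_mod_cast this
  have hrep : ∀ β : FreeExp ↥(BlockS G₀), fac β = s →
      (∑ i, (β i : ℝ) • atomVec G₀ i = fun x => (((s : G₀ →₀ ℕ) x : ℕ) : ℝ)) := by
    intro β hβ
    funext x
    rw [← hβ, fac_apply, Finsupp.sum_fintype _ _ (fun _ => zero_mul _)]
    simp [atomVec, Finset.sum_apply]
  refine exists_small_rep (atomVec G₀) _
    {a | ∃ β, fac β = s ∧ β a ≠ 0 ∧ Conn (wS G₀) D α β}
    {a | ∃ β, fac β = s ∧ β a ≠ 0 ∧ ¬ Conn (wS G₀) D α β}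
    (fun i => α i) (fun i => γ i) (by simp) (by simp) (hrep α hα) (hrep γ hγ)
    (fun i hi => ⟨α, hα, by exact_mod_cast hi, Relation.ReflTransGen.refl⟩)
    (fun i hi => ⟨γ, hγ, by exact_mod_cast hi, hnc⟩) ?_ ?_
  · intro e he hes i hi
    obtain ⟨u, hu⟩ := blockS_exists_sub (s := s) (t := (i : ↥(BlockS G₀))) (fun x => by
      simpa using hle e he hes {i} (by simpa using hi) x)
    obtain ⟨β, rfl⟩ := exists_fac u
    by_cases hc : Conn (wS G₀) D α (Finsupp.single i 1 + β)
    · exact Or.inl ⟨_, by rw [fac_add, fac_single, hu], by simp, hc⟩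
    · exact Or.inr ⟨_, by rw [fac_add, fac_single, hu], by simp, hc⟩
  · rintro e he hes i ⟨β, hβ, hβi, hc⟩ j ⟨δ, hδ, hδj, hnc'⟩ hi hj
    have hij : i ≠ j := by
      rintro rfl
      exact hnc' (hc.trans (hshare β δ hβ hδ i hβi hδj))
    obtain ⟨u, hu⟩ := blockS_exists_sub (s := s)
      (t := (i : ↥(BlockS G₀)) + (j : ↥(BlockS G₀))) (fun x => by
        have := hle e he hes {i, j} (by simp [hi, hj]) x
        rw [Finset.sum_pair hij] at this
        simpa using this)
    obtain ⟨ε, rfl⟩ := exists_fac u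
    have hε : fac (Finsupp.single i 1 + Finsupp.single j 1 + ε) = s := by
      rw [fac_add, fac_add, fac_single, fac_single, hu]
    exact hnc' ((hc.trans (hshare β _ hβ hε i hβi (by simp))).trans
      (hshare _ δ hε hδ j (by simp) hδj))

/-- If `s` is a combination of atoms with coefficients less than `1`, then the sum of the atoms
involved exceeds `s` by at least one at each group element `x` in the support `J` of that sum;
and `J` has at least as many elements as any independent set `T` of these atoms. -/
lemma degree_bound [Fintype G₀] [Fintype ↥(Atoms ↥(BlockS G₀))] (s : ↥(BlockS G₀))
    (e : ↥(Atoms ↥(BlockS G₀)) → ℝ)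
    (hes : ∑ i, e i • atomVec G₀ i = fun x => (((s : G₀ →₀ ℕ) x : ℕ) : ℝ))
    (hlt : ∀ i, e i < 1) (T : Finset ↥(Atoms ↥(BlockS G₀))) (hT : T ⊆ rsupp e)
    (hind : LinearIndepOn ℝ (atomVec G₀) (T : Set ↥(Atoms ↥(BlockS G₀)))) :
    wS G₀ s + T.card ≤ ∑ i ∈ rsupp e, wS G₀ (i : ↥(BlockS G₀)) := by
  classical
  set J : Finset G₀ := Finset.univ.filter fun x =>
    ∃ i ∈ rsupp e, ((i : ↥(BlockS G₀)) : G₀ →₀ ℕ) x ≠ 0 with hJ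
  have hcard : T.card ≤ J.card := by
    have := linearIndependent_le_span' (fun i : (T : Set ↥(Atoms ↥(BlockS G₀))) => atomVec G₀ i)
      hind ((J.image fun x => (Pi.single x 1 : G₀ → ℝ) : Finset (G₀ → ℝ)) : Set (G₀ → ℝ)) ?_
    · simp only [Cardinal.mk_fintype, Fintype.card_coe, Nat.cast_le, Finset.coe_sort_coe] at this
      exact this.trans Finset.card_image_le
    · rintro _ ⟨⟨i, hi⟩, rfl⟩
      have : atomVec G₀ i = ∑ x, atomVec G₀ i x • (Pi.single x 1 : G₀ → ℝ) := by
        funext y; simp [Finset.sum_apply, Pi.single_apply]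
      simp only [SetLike.mem_coe]
      rw [this]
      refine Submodule.sum_mem _ fun x _ => ?_
      by_cases hx : x ∈ J
      · exact Submodule.smul_mem _ _ (Submodule.subset_span (by
          exact Finset.mem_coe.2 (Finset.mem_image_of_mem _ hx)))
      · have : atomVec G₀ i x = 0 := by
          by_contra h
          refine hx ?_
          rw [hJ, Finset.mem_filter]
          exact ⟨Finset.mem_univ _, i, hT hi, by simpa [atomVec] using h⟩
        rw [this, zero_smul]
        exact Submodule.zero_mem _
  have hx : ∀ x, (s : G₀ →₀ ℕ) x + (if x ∈ J then 1 else 0) ≤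
      ∑ i ∈ rsupp e, ((i : ↥(BlockS G₀)) : G₀ →₀ ℕ) x := by
    intro x
    have h1 := congrFun hes x
    simp only [Finset.sum_apply, Pi.smul_apply, smul_eq_mul, atomVec] at h1
    have h2 : ∑ i ∈ rsupp e, e i * (((i : ↥(BlockS G₀)) : G₀ →₀ ℕ) x : ℝ) =
        ((s : G₀ →₀ ℕ) x : ℝ) := by
      rw [← h1]
      exact Finset.sum_subset (Finset.subset_univ _) fun i _ hi => by
        simp [notMem_rsupp.1 hi]
    have hle : ∀ i ∈ rsupp e, e i * (((i : ↥(BlockS G₀)) : G₀ →₀ ℕ) x : ℝ) ≤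
        (((i : ↥(BlockS G₀)) : G₀ →₀ ℕ) x : ℝ) := fun i _ =>
      mul_le_of_le_one_left (Nat.cast_nonneg _) (hlt i).le
    split_ifs with hxJ
    · rw [Nat.succ_le_iff]
      rw [hJ, Finset.mem_filter] at hxJ
      obtain ⟨-, i, hi, hix⟩ := hxJ
      have : ((s : G₀ →₀ ℕ) x : ℝ) < ∑ i ∈ rsupp e, (((i : ↥(BlockS G₀)) : G₀ →₀ ℕ) x : ℝ) := by
        rw [← h2]
        refine Finset.sum_lt_sum hle ⟨i, hi, ?_⟩
        exact mul_lt_of_lt_one_left (by exact_mod_cast Nat.pos_of_ne_zero hix) (hlt i)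
      exact_mod_cast this
    · have : ((s : G₀ →₀ ℕ) x : ℝ) ≤ ∑ i ∈ rsupp e, (((i : ↥(BlockS G₀)) : G₀ →₀ ℕ) x : ℝ) := by
        rw [← h2]
        exact Finset.sum_le_sum hle
      exact_mod_cast this
  have hsum := Finset.sum_le_sum fun x (_ : x ∈ (Finset.univ : Finset G₀)) => hx x
  rw [Finset.sum_add_distrib, Finset.sum_comm] at hsum
  simp only [wS, degE_eq_sum]
  have : ∑ x : G₀, (if x ∈ J then 1 else 0) = J.card := by simp
  omega

/-- An independent set of atoms has size at most the rank of the group generated by the monoid. -/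
lemma indep_card_le [Fintype G₀] (T : Finset ↥(Atoms ↥(BlockS G₀)))
    (hind : LinearIndepOn ℝ (atomVec G₀) (T : Set ↥(Atoms ↥(BlockS G₀)))) :
    T.card ≤ Module.finrank ℤ ↥(Submodule.span ℤ
      ((fun α : G₀ →₀ ℕ => Finsupp.mapRange (Nat.cast : ℕ → ℤ) Nat.cast_zero α) ''
        ((BlockS G₀ : Set (G₀ →₀ ℕ))))) := by
  classical
  set M := Submodule.span ℤ
      ((fun α : G₀ →₀ ℕ => Finsupp.mapRange (Nat.cast : ℕ → ℤ) Nat.cast_zero α) ''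
        ((BlockS G₀ : Set (G₀ →₀ ℕ)))) with hM
  let v : ↥(T : Set ↥(Atoms ↥(BlockS G₀))) → M := fun a =>
    ⟨Finsupp.mapRange (Nat.cast : ℕ → ℤ) Nat.cast_zero ((a : ↥(Atoms ↥(BlockS G₀))) :
      ↥(BlockS G₀)), Submodule.subset_span ⟨_, ((a : ↥(Atoms ↥(BlockS G₀))) :
      ↥(BlockS G₀)).2, rfl⟩⟩
  let L : M →ₗ[ℤ] (G₀ → ℝ) :=
    (LinearMap.pi fun x => (Int.castAddHom ℝ).toIntLinearMap ∘ₗ Finsupp.lapply x) ∘ₗ M.subtype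
  have hv : LinearIndependent ℤ v := by
    refine LinearIndependent.of_comp L ?_
    have h1 : LinearIndependent ℤ (fun i : (T : Set ↥(Atoms ↥(BlockS G₀))) => atomVec G₀ i) :=
      LinearIndependent.restrict_scalars (R := ℤ) (K := ℝ) (by
        intro a b h; simpa using h) hind
    have h2 : L ∘ v = fun i : ↥(T : Set ↥(Atoms ↥(BlockS G₀))) => atomVec G₀ i := by
      funext a x
      simp [L, v, atomVec]
    rw [h2]
    exact h1
  have := hv.fintype_card_le_finrank
  simpa using this

/-- If the number of atoms does not exceed the rank, factorization is unique: the linear map sending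
basis vectors to atoms is onto the group generated by the monoid, so its kernel has rank `0`. -/
lemma fac_injective_of_card_le [Fintype G₀] [Fintype ↥(Atoms ↥(BlockS G₀))]
    (h : Fintype.card ↥(Atoms ↥(BlockS G₀)) ≤ Module.finrank ℤ ↥(Submodule.span ℤ
      ((fun α : G₀ →₀ ℕ => Finsupp.mapRange (Nat.cast : ℕ → ℤ) Nat.cast_zero α) ''
        ((BlockS G₀ : Set (G₀ →₀ ℕ))))))
    (α γ : FreeExp ↥(BlockS G₀)) (hαγ : fac α = fac γ) : α = γ := by
  classical
  let c : ↥(Atoms ↥(BlockS G₀)) → (G₀ →₀ ℤ) := fun a =>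
    Finsupp.mapRange (Nat.cast : ℕ → ℤ) Nat.cast_zero (a : ↥(BlockS G₀))
  let L : (↥(Atoms ↥(BlockS G₀)) → ℤ) →ₗ[ℤ] (G₀ →₀ ℤ) := Fintype.linearCombination ℤ c
  have hL : ∀ β : FreeExp ↥(BlockS G₀), L (fun a => (β a : ℤ)) =
      Finsupp.mapRange (Nat.cast : ℕ → ℤ) Nat.cast_zero ((fac β : ↥(BlockS G₀)) : G₀ →₀ ℕ) := by
    intro β
    ext x
    rw [Finsupp.mapRange_apply, fac_apply, Finsupp.sum_fintype _ _ (fun _ => zero_mul _)]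
    simp [L, c, Fintype.linearCombination_apply, Finsupp.finsetSum_apply]
  have hspan : Submodule.span ℤ
      ((fun α : G₀ →₀ ℕ => Finsupp.mapRange (Nat.cast : ℕ → ℤ) Nat.cast_zero α) ''
        ((BlockS G₀ : Set (G₀ →₀ ℕ)))) ≤ LinearMap.range L := by
    rw [Submodule.span_le]
    rintro _ ⟨s, hs, rfl⟩
    obtain ⟨β, hβ⟩ := exists_fac (⟨s, hs⟩ : ↥(BlockS G₀))
    exact ⟨_, by rw [hL β, hβ]⟩
  have h1 := Submodule.finrank_mono hspan
  have h2 := Submodule.finrank_quotient_add_finrank (LinearMap.ker L)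
  rw [L.quotKerEquivRange.finrank_eq, Module.finrank_fintype_fun_eq_card] at h2
  have h3 : Module.finrank ℤ (LinearMap.ker L) = 0 := by omega
  rw [Submodule.finrank_eq_zero, LinearMap.ker_eq_bot] at h3
  have h4 := h3 ((hL α).trans (by rw [hαγ, hL γ]))
  ext a
  exact_mod_cast congrFun h4 a

end blockS

lemma le_of_strictMono {M n : ℕ} {φ : Fin M → Fin n} (hφ : StrictMono φ) (i : Fin M) :
    (i : ℕ) ≤ φ i := by
  obtain ⟨i, hi⟩ := i
  induction i with
  | zero => exact Nat.zero_le _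
  | succ k ih =>
    exact (ih (by omega)).trans_lt (Fin.lt_def.1 (hφ (Fin.mk_lt_mk.2 (Nat.lt_succ_self k))))

/-- For a decreasing positive sequence, replacing `U` by the first `M ≥ #U` indices increases the
sum by at least `M - #U`. -/
lemma sum_le_sum_initial {n : ℕ} (f : Fin n → ℕ) (hf : ∀ i j, i ≤ j → f j ≤ f i)
    (hpos : ∀ i, 1 ≤ f i) (M : ℕ) (hM : M ≤ n) (U : Finset (Fin n)) (hU : U.card ≤ M) :
    ∑ i ∈ U, f i + (M - U.card) ≤ ∑ i : Fin M, f (Fin.castLE hM i) := by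
  obtain ⟨U', hUU', hcard⟩ := Finset.exists_superset_card_eq hU (by simpa using hM)
  have h1 : ∑ i ∈ U', f i ≤ ∑ i : Fin M, f (Fin.castLE hM i) := by
    rw [← Finset.image_orderEmbOfFin_univ U' hcard,
      Finset.sum_image fun a _ b _ h => (U'.orderEmbOfFin hcard).injective h]
    refine Finset.sum_le_sum fun i _ => hf _ _ ?_
    exact le_of_strictMono (U'.orderEmbOfFin hcard).strictMono i
  have h2 : (U' \ U).card ≤ ∑ i ∈ U' \ U, f i := by
    simpa using Finset.card_nsmul_le_sum (U' \ U) f 1 fun i _ => hpos i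
  have h3 := Finset.sum_sdiff hUU' (f := f)
  rw [Finset.card_sdiff_of_subset hUU', hcard] at h2
  omega

section blockS_bound

variable {G : Type*} [CommGroup G] {G₀ : Set G}

/-- If every set of at most `r + 1` atoms satisfies the stated degree bound then `D` bounds the
graded catenary degree of the block monoid. -/
lemma blockS_conn [Fintype G₀] [Fintype ↥(Atoms ↥(BlockS G₀))] (r D : ℕ)
    (hr : r = Module.finrank ℤ ↥(Submodule.span ℤ
      ((fun α : G₀ →₀ ℕ => Finsupp.mapRange (Nat.cast : ℕ → ℤ) Nat.cast_zero α) ''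
        ((BlockS G₀ : Set (G₀ →₀ ℕ))))))
    (hD : ∀ U : Finset ↥(Atoms ↥(BlockS G₀)), U.card ≤ r + 1 →
      ∑ i ∈ U, wS G₀ (i : ↥(BlockS G₀)) + (r + 1 - U.card) ≤ D + r)
    (α γ : FreeExp ↥(BlockS G₀)) (hαγ : fac α = fac γ) : Conn (wS G₀) D α γ := by
  induction hN : wS G₀ (fac α) using Nat.strong_induction_on generalizing α γ with
  | _ N ih =>
    by_cases hle : N ≤ D
    · have h := chainStep_add (w := wS G₀) (d := D) 0 hαγ (by rw [gdegE_wS]; omega)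
        (by rw [gdegE_wS, ← hαγ]; omega)
      rw [zero_add, zero_add] at h
      exact Relation.ReflTransGen.single h
    by_contra hnc
    obtain ⟨e, -, hes, hlt, T, hT, hind, hcard⟩ := exists_rep_of_not_conn D (fac α)
      (fun t ht α' γ' hα' hγ' => ih (wS G₀ t) (by omega) α' γ' (hα'.trans hγ'.symm) (by rw [hα']))
      α γ rfl hαγ.symm hnc
    have h1 := degree_bound (fac α) e hes hlt T hT hind
    have h2 := indep_card_le T hind
    rw [← hr] at h2
    have h3 := hD (rsupp e) (by omega)
    omega

end blockS_bound

lemma exists_of_mapDomain_ne_zero {σ τ : Type*} (f : σ → τ) {α : σ →₀ ℕ} {t : τ}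
    (h : Finsupp.mapDomain f α t ≠ 0) : ∃ i, α i ≠ 0 ∧ f i = t := by
  classical
  have := Finsupp.mapDomain_support (Finsupp.mem_support_iff.2 h)
  obtain ⟨i, hi, rfl⟩ := Finset.mem_image.1 this
  exact ⟨i, Finsupp.mem_support_iff.1 hi, rfl⟩

lemma degE_single {σ : Type*} (a : σ) : degE (Finsupp.single a 1) = 1 := by
  simp [degE]

lemma degE_mapDomain {σ τ : Type*} (f : σ → τ) (α : σ →₀ ℕ) :
    degE (Finsupp.mapDomain f α) = degE α :=
  Finsupp.sum_mapDomain_index (fun _ => rfl) (fun _ _ _ => rfl)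

/-- A decomposition of the image of `α` under a map of index sets lifts to `α`. -/
lemma exists_split_of_mapDomain {σ τ : Type*} (f : σ → τ) (x y : τ →₀ ℕ) (α : σ →₀ ℕ)
    (h : Finsupp.mapDomain f α = x + y) :
    ∃ α₁ α₂, α = α₁ + α₂ ∧ Finsupp.mapDomain f α₁ = x ∧ Finsupp.mapDomain f α₂ = y := by
  induction hN : degE x using Nat.strong_induction_on generalizing x α with
  | _ N ih =>
    by_cases hx : x = 0
    · subst hx
      exact ⟨0, α, by simp, by simp, by simpa using h⟩
    obtain ⟨t, ht⟩ := exists_ne_of_ne_zero hx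
    obtain ⟨x', rfl⟩ := exists_single_add x ht
    obtain ⟨i, hi, rfl⟩ := exists_of_mapDomain_ne_zero f (α := α) (t := t) (by rw [h]; simp)
    obtain ⟨α', rfl⟩ := exists_single_add α hi
    rw [Finsupp.mapDomain_add, Finsupp.mapDomain_single, add_assoc] at h
    rw [degE_add, degE_single] at hN
    obtain ⟨α₁, α₂, rfl, h1, h2⟩ := ih (degE x') (by omega) x' α' (add_left_cancel h) rfl
    exact ⟨Finsupp.single i 1 + α₁, α₂, by rw [add_assoc],
      by rw [Finsupp.mapDomain_add, Finsupp.mapDomain_single, h1], h2⟩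

/-! ### The transfer homomorphism from `ℬ(g)` to `ℬ(supp g)` -/

section transfer

variable {G : Type*} [CommGroup G] {m : ℕ} (g : Fin m → G)

/-- Exponent vectors over the tuple, pushed to exponent vectors over the set of its values. -/
noncomputable def push : (Fin m → ℕ) →+ (↥(Set.range g) →₀ ℕ) where
  toFun α := Finsupp.mapDomain (Set.rangeFactorization g) (Finsupp.equivFunOnFinite.symm α)
  map_zero' := by
    rw [show Finsupp.equivFunOnFinite.symm (0 : Fin m → ℕ) = 0 from by ext; rfl,
      Finsupp.mapDomain_zero]
  map_add' α β := by
    rw [show Finsupp.equivFunOnFinite.symm (α + β) = Finsupp.equivFunOnFinite.symm α +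
      Finsupp.equivFunOnFinite.symm β from by ext; rfl, Finsupp.mapDomain_add]

lemma push_def (α : Fin m → ℕ) : push g α =
    Finsupp.mapDomain (Set.rangeFactorization g) (Finsupp.equivFunOnFinite.symm α) := rfl

lemma push_mem {α : Fin m → ℕ} : push g α ∈ BlockS (Set.range g) ↔ α ∈ BlockT g := by
  change (push g α).prod (fun x n => (x : G) ^ n) = 1 ↔ ∏ i, g i ^ α i = 1
  rw [push_def, Finsupp.prod_mapDomain_index (fun _ => pow_zero _) (fun _ _ _ => pow_add _ _ _),
    Finsupp.prod_fintype _ _ (fun _ => pow_zero _)]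
  rfl

lemma degE_push (α : Fin m → ℕ) : degE (push g α) = ∑ i, α i := by
  rw [push_def, degE_mapDomain, degE_eq_sum]
  rfl

open Classical in
lemma push_apply (α : Fin m → ℕ) (x : ↥(Set.range g)) :
    push g α x = ∑ i ∈ Finset.univ.filter (fun i => Set.rangeFactorization g i = x), α i := by
  rw [push_def, Finsupp.mapDomain, Finsupp.sum_fintype _ _ (by simp)]
  simp [Finsupp.finsetSum_apply, Finsupp.single_apply, Finset.sum_filter]

lemma push_single {p q : Fin m} (h : g p = g q) :
    push g (Pi.single p 1) = push g (Pi.single q 1) := by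
  rw [push_def, push_def, Finsupp.equivFunOnFinite_symm_single,
    Finsupp.equivFunOnFinite_symm_single, Finsupp.mapDomain_single, Finsupp.mapDomain_single]
  congr 1
  exact Subtype.ext h

/-- The transfer homomorphism from the block monoid of a tuple to that of its support. -/
noncomputable def pushB : ↥(BlockT g) →+ ↥(BlockS (Set.range g)) where
  toFun s := ⟨push g (s : Fin m → ℕ), (push_mem g).2 s.2⟩
  map_zero' := Subtype.ext (map_zero (push g))
  map_add' s t := Subtype.ext (map_add (push g) (s : Fin m → ℕ) (t : Fin m → ℕ))

/-- The degree grading of `BlockT`. -/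
abbrev wT : ↥(BlockT g) → ℕ := fun α => ∑ i, (α : Fin m → ℕ) i

lemma wS_pushB (s : ↥(BlockT g)) : wS (Set.range g) (pushB g s) = wT g s := degE_push g s

lemma wT_zero : wT g 0 = 0 := by simp [wT]

lemma wT_add (s t : ↥(BlockT g)) : wT g (s + t) = wT g s + wT g t := by
  rw [← wS_pushB, map_add, wS_add, wS_pushB, wS_pushB]

lemma pushB_eq_zero {s : ↥(BlockT g)} : pushB g s = 0 ↔ s = 0 := by
  constructor
  · intro h
    have h1 : ∑ i, (s : Fin m → ℕ) i = 0 := by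
      change wT g s = 0
      rw [← wS_pushB, h]
      exact wS_eq_zero.2 rfl
    rw [Finset.sum_eq_zero_iff] at h1
    exact Subtype.ext (funext fun i => h1 i (Finset.mem_univ i))
  · rintro rfl; exact map_zero _

/-- Sums lift along `pushB`; this is what makes it a transfer homomorphism. -/
lemma pushB_split {s : ↥(BlockT g)} {x y : ↥(BlockS (Set.range g))} (h : pushB g s = x + y) :
    ∃ s₁ s₂, s = s₁ + s₂ ∧ pushB g s₁ = x ∧ pushB g s₂ = y := by
  obtain ⟨α₁, α₂, h0, h1, h2⟩ := exists_split_of_mapDomain (Set.rangeFactorization g) x y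
    (Finsupp.equivFunOnFinite.symm (s : Fin m → ℕ)) (congrArg Subtype.val h)
  have e1 : push g (α₁ : Fin m → ℕ) = x := by
    rw [push_def, Finsupp.equivFunOnFinite_symm_coe]; exact h1
  have e2 : push g (α₂ : Fin m → ℕ) = y := by
    rw [push_def, Finsupp.equivFunOnFinite_symm_coe]; exact h2
  refine ⟨⟨α₁, (push_mem g).1 (e1 ▸ x.2)⟩, ⟨α₂, (push_mem g).1 (e2 ▸ y.2)⟩, ?_,
    Subtype.ext e1, Subtype.ext e2⟩
  exact Subtype.ext (congrArg (fun β : Fin m →₀ ℕ => (β : Fin m → ℕ)) h0)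

lemma isAtm_pushB {s : ↥(BlockT g)} : IsAtm (pushB g s) ↔ IsAtm s := by
  constructor
  · rintro ⟨h0, h⟩
    refine ⟨fun hs => h0 ((pushB_eq_zero g).2 hs), fun b c hbc => ?_⟩
    have := h (pushB g b) (pushB g c) (by rw [hbc, map_add])
    rwa [pushB_eq_zero, pushB_eq_zero] at this
  · rintro ⟨h0, h⟩
    refine ⟨fun hs => h0 ((pushB_eq_zero g).1 hs), fun b c hbc => ?_⟩
    obtain ⟨s₁, s₂, hs, rfl, rfl⟩ := pushB_split g hbc
    rw [pushB_eq_zero, pushB_eq_zero]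
    exact h s₁ s₂ hs

/-- The transfer homomorphism on atoms. -/
noncomputable def pushA (a : ↥(Atoms ↥(BlockT g))) : ↥(Atoms ↥(BlockS (Set.range g))) :=
  ⟨pushB g a, (isAtm_pushB g).2 a.2⟩

/-- The transfer homomorphism on factorizations. -/
noncomputable def pushF (α : FreeExp ↥(BlockT g)) : FreeExp ↥(BlockS (Set.range g)) :=
  Finsupp.mapDomain (pushA g) α

lemma pushF_add (α β : FreeExp ↥(BlockT g)) : pushF g (α + β) = pushF g α + pushF g β :=
  Finsupp.mapDomain_add

lemma pushF_single (a : ↥(Atoms ↥(BlockT g))) :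
    pushF g (Finsupp.single a 1) = Finsupp.single (pushA g a) 1 :=
  Finsupp.mapDomain_single

lemma fac_pushF (α : FreeExp ↥(BlockT g)) : fac (pushF g α) = pushB g (fac α) := by
  refine (Finsupp.sum_mapDomain_index (f := pushA g) (s := α)
    (h := fun (a : ↥(Atoms ↥(BlockS (Set.range g)))) (n : ℕ) => n • (a : ↥(BlockS (Set.range g))))
    (fun _ => zero_nsmul _) (fun _ _ _ => add_nsmul _ _ _)).trans ?_
  rw [fac, map_finsuppSum]
  refine Finsupp.sum_congr fun a _ => ?_
  rw [map_nsmul]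
  rfl

lemma gdegE_pushF (α : FreeExp ↥(BlockT g)) :
    gdegE (wS (Set.range g)) (pushF g α) = gdegE (wT g) α := by
  rw [gdegE_wS, fac_pushF, wS_pushB, gdegE_eq_of_grading (wT g) (wT_zero g) (wT_add g)]

/-- Factorizations lift along the transfer homomorphism. -/
lemma exists_lift_fac (β : FreeExp ↥(BlockS (Set.range g))) (t : ↥(BlockT g))
    (h : pushB g t = fac β) : ∃ α, pushF g α = β ∧ fac α = t := by
  induction hN : degE β using Nat.strong_induction_on generalizing β t with
  | _ N ih =>
    by_cases hβ : β = 0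
    · subst hβ
      rw [fac_zero, pushB_eq_zero] at h
      exact ⟨0, Finsupp.mapDomain_zero, by rw [fac_zero, h]⟩
    obtain ⟨a, ha⟩ := exists_ne_of_ne_zero hβ
    obtain ⟨β', rfl⟩ := exists_single_add β ha
    rw [fac_add, fac_single] at h
    rw [degE_add, degE_single] at hN
    obtain ⟨t₁, t₂, rfl, h1, h2⟩ := pushB_split g h
    obtain ⟨α, rfl, rfl⟩ := ih (degE β') (by omega) β' t₂ h2 rfl
    have ht₁ : IsAtm t₁ := (isAtm_pushB g).1 (h1 ▸ a.2)
    refine ⟨Finsupp.single ⟨t₁, ht₁⟩ 1 + α, ?_, by rw [fac_add, fac_single]⟩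
    rw [pushF_add, pushF_single]
    congr 2
    exact Subtype.ext h1

lemma blockS_add_left_cancel {G₀ : Set G} {a b c : ↥(BlockS G₀)} (h : a + b = a + c) : b = c :=
  Subtype.ext (add_left_cancel (congrArg Subtype.val h))

lemma blockT_add_left_cancel {a b c : ↥(BlockT g)} (h : a + b = a + c) : b = c :=
  Subtype.ext (add_left_cancel (congrArg Subtype.val h))

/-- Steps lift along the transfer homomorphism without increasing the cost. -/
lemma exists_lift_step {d : ℕ} (α : FreeExp ↥(BlockT g)) (β : FreeExp ↥(BlockS (Set.range g)))
    (h : ChainStep (wS (Set.range g)) d (pushF g α) β) :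
    ∃ γ, pushF g γ = β ∧ ChainStep (wT g) d α γ := by
  obtain ⟨hfac, hd⟩ := h
  rw [dDistGr, max_le_iff] at hd
  set δ := gcdE (pushF g α) β with hδ
  have h1 : pushF g α = δ + (pushF g α - δ) := by
    ext i
    simp only [hδ, Finsupp.add_apply, Finsupp.tsub_apply, gcdE_apply]
    omega
  have h2 : β = δ + (β - δ) := by
    ext i
    simp only [hδ, Finsupp.add_apply, Finsupp.tsub_apply, gcdE_apply]
    omega
  obtain ⟨α₁, α₂, hα, e1, e2⟩ := exists_split_of_mapDomain (pushA g) _ _ α h1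
  have e1' : pushF g α₁ = δ := e1
  have e2' : pushF g α₂ = pushF g α - δ := e2
  have hfac' : pushB g (fac α₂) = fac (β - δ) := by
    rw [h1, h2, fac_add, fac_add] at hfac
    rw [← fac_pushF, e2']
    have := blockS_add_left_cancel hfac
    exact this
  obtain ⟨α₃, e3, hf⟩ := exists_lift_fac g _ _ hfac'
  refine ⟨α₁ + α₃, by rw [pushF_add, e1', e3, ← h2], ?_⟩
  rw [hα]
  refine chainStep_add α₁ hf.symm ?_ ?_
  · rw [← gdegE_pushF, e2']; exact hd.1
  · rw [← gdegE_pushF, e3]; exact hd.2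

lemma exists_lift_conn {d : ℕ} (α : FreeExp ↥(BlockT g)) (β : FreeExp ↥(BlockS (Set.range g)))
    (h : Conn (wS (Set.range g)) d (pushF g α) β) :
    ∃ γ, pushF g γ = β ∧ Conn (wT g) d α γ := by
  induction h with
  | refl => exact ⟨α, rfl, Relation.ReflTransGen.refl⟩
  | tail _ hs ih =>
    obtain ⟨γ, rfl, hc⟩ := ih
    obtain ⟨γ', hγ', hs'⟩ := exists_lift_step g γ _ hs
    exact ⟨γ', hγ', hc.tail hs'⟩

/-- Replacing one occurrence of the index `p` in an atom by an index `q` with `g p = g q`. -/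
lemma exists_atom_swap (u : ↥(Atoms ↥(BlockT g))) {p q : Fin m} (hpq : g p = g q)
    (hp : ((u : ↥(BlockT g)) : Fin m → ℕ) p ≠ 0) :
    ∃ u' : ↥(Atoms ↥(BlockT g)), pushA g u' = pushA g u ∧
      ((u' : ↥(BlockT g)) : Fin m → ℕ) + Pi.single p 1 =
        ((u : ↥(BlockT g)) : Fin m → ℕ) + Pi.single q 1 := by
  classical
  obtain ⟨v, hv⟩ : ∃ v : Fin m → ℕ,
      ((u : ↥(BlockT g)) : Fin m → ℕ) = (Pi.single p 1 : Fin m → ℕ) + v := by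
    refine exists_add_of_le (Pi.le_def.2 fun i => ?_)
    by_cases hi : i = p
    · subst hi; simp; omega
    · simp [hi]
  have hpush : push g (Pi.single q 1 + v) = push g ((u : ↥(BlockT g)) : Fin m → ℕ) := by
    rw [hv, map_add, map_add, push_single g hpq]
  have hmem : Pi.single q 1 + v ∈ BlockT g := by
    rw [← push_mem, hpush, push_mem]
    exact (u : ↥(BlockT g)).2
  have hB : pushB g ⟨_, hmem⟩ = pushB g u := Subtype.ext hpush
  refine ⟨⟨⟨_, hmem⟩, (isAtm_pushB g).1 (hB ▸ (isAtm_pushB g).2 u.2)⟩, Subtype.ext hB, ?_⟩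
  change Pi.single q 1 + v + Pi.single p 1 = _
  rw [hv]
  abel

lemma facT_apply (α : FreeExp ↥(BlockT g)) (i : Fin m) :
    ((fac α : ↥(BlockT g)) : Fin m → ℕ) i =
      α.sum fun a n => n * ((a : ↥(BlockT g)) : Fin m → ℕ) i := by
  let F : ↥(BlockT g) →+ ℕ := (Pi.evalAddMonoidHom (fun _ : Fin m => ℕ) i).comp (BlockT g).subtype
  change F (fac α) = _
  rw [fac, map_finsuppSum]
  simp [F]

/-- Two different atoms over the same atom differ in opposite directions at two indices with
the same group element. -/
lemma exists_pair_of_ne {u v : ↥(Atoms ↥(BlockT g))} (huv : pushA g u = pushA g v) (hne : u ≠ v) :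
    ∃ p q, g p = g q ∧
      ((v : ↥(BlockT g)) : Fin m → ℕ) p < ((u : ↥(BlockT g)) : Fin m → ℕ) p ∧
      ((u : ↥(BlockT g)) : Fin m → ℕ) q < ((v : ↥(BlockT g)) : Fin m → ℕ) q := by
  classical
  have hpush : push g ((u : ↥(BlockT g)) : Fin m → ℕ) = push g ((v : ↥(BlockT g)) : Fin m → ℕ) :=
    congrArg (fun a : ↥(Atoms ↥(BlockS (Set.range g))) =>
      ((a : ↥(BlockS (Set.range g))) : ↥(Set.range g) →₀ ℕ)) huv
  obtain ⟨i, hi⟩ : ∃ i, ((u : ↥(BlockT g)) : Fin m → ℕ) i ≠ ((v : ↥(BlockT g)) : Fin m → ℕ) i := by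
    by_contra! h
    exact hne (Subtype.ext (Subtype.ext (funext h)))
  have hx := DFunLike.congr_fun hpush (Set.rangeFactorization g i)
  rw [push_apply, push_apply] at hx
  have key : ∀ f f' : Fin m → ℕ, f i ≠ f' i →
      ∑ j ∈ Finset.univ.filter (fun j => Set.rangeFactorization g j = Set.rangeFactorization g i),
        f j = ∑ j ∈ Finset.univ.filter
          (fun j => Set.rangeFactorization g j = Set.rangeFactorization g i), f' j →
      ∃ p, g p = g i ∧ f' p < f p := by
    intro f f' hne hsum
    by_contra! h
    have := (Finset.sum_eq_sum_iff_of_le fun j hj => h j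
      (congrArg Subtype.val (Finset.mem_filter.1 hj).2)).1 hsum
    exact hne (this i (by simp))
  obtain ⟨p, hp, hp'⟩ := key _ _ hi hx
  obtain ⟨q, hq, hq'⟩ := key _ _ hi.symm hx.symm
  exact ⟨p, q, hp.trans hq.symm, hp', hq'⟩

/-- A factorization with an atom `u` is connected to one with a prescribed atom `v` in place of `u`,
if `v` divides the product and lies over the same atom as `u`. Each step trades a unit of `u` at
some `p` for a unit of another atom at some `q` with `g p = g q`, bringing `u` closer to `v`; it
changes two atoms and so costs at most `2 * M`. -/
lemma exists_conn_atom {d M : ℕ} (hM : ∀ a : ↥(Atoms ↥(BlockT g)), wT g a ≤ M) (hd : 2 * M ≤ d)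
    (v : ↥(Atoms ↥(BlockT g))) (u : ↥(Atoms ↥(BlockT g))) (α : FreeExp ↥(BlockT g))
    (huv : pushA g u = pushA g v) (t : ↥(BlockT g))
    (ht : (u : ↥(BlockT g)) + fac α = (v : ↥(BlockT g)) + t) :
    ∃ β, Conn (wT g) d (Finsupp.single u 1 + α) (Finsupp.single v 1 + β) ∧
      pushF g β = pushF g α := by
  classical
  induction hN : ∑ i, (((u : ↥(BlockT g)) : Fin m → ℕ) i - ((v : ↥(BlockT g)) : Fin m → ℕ) i)
    using Nat.strong_induction_on generalizing u α with
  | _ N ih =>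
    by_cases hne : u = v
    · subst hne
      exact ⟨α, Relation.ReflTransGen.refl, rfl⟩
    obtain ⟨p, q, hpq, hp, hq⟩ := exists_pair_of_ne g huv hne
    have hpne : p ≠ q := by rintro rfl; omega
    have hαq : ((fac α : ↥(BlockT g)) : Fin m → ℕ) q ≠ 0 := by
      have := congrFun (congrArg Subtype.val ht) q
      change ((u : ↥(BlockT g)) : Fin m → ℕ) q + ((fac α : ↥(BlockT g)) : Fin m → ℕ) q =
        ((v : ↥(BlockT g)) : Fin m → ℕ) q + (t : Fin m → ℕ) q at this
      omega
    obtain ⟨b, hb, hbq⟩ : ∃ b, α b ≠ 0 ∧ ((b : ↥(BlockT g)) : Fin m → ℕ) q ≠ 0 := by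
      by_contra! h
      refine hαq ?_
      rw [facT_apply]
      exact Finset.sum_eq_zero fun b hb => by
        simp [h b (Finsupp.mem_support_iff.1 hb)]
    obtain ⟨α', rfl⟩ := exists_single_add α hb
    obtain ⟨u', hu', hu'e⟩ := exists_atom_swap g u hpq (by omega)
    obtain ⟨b', hb', hb'e⟩ := exists_atom_swap g b hpq.symm hbq
    have hsum : (u : ↥(BlockT g)) + (b : ↥(BlockT g)) = (u' : ↥(BlockT g)) + (b' : ↥(BlockT g)) := by
      refine Subtype.ext (funext fun i => ?_)
      have h1 := congrFun hu'e i
      have h2 := congrFun hb'e i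
      simp only [Pi.add_apply] at h1 h2
      change ((u : ↥(BlockT g)) : Fin m → ℕ) i + ((b : ↥(BlockT g)) : Fin m → ℕ) i =
        ((u' : ↥(BlockT g)) : Fin m → ℕ) i + ((b' : ↥(BlockT g)) : Fin m → ℕ) i
      omega
    have hstep : ChainStep (wT g) d (α' + (Finsupp.single u 1 + Finsupp.single b 1))
        (α' + (Finsupp.single u' 1 + Finsupp.single b' 1)) := by
      have h1 := hM u
      have h2 := hM b
      have h3 := hM u'
      have h4 := hM b'
      refine chainStep_add α' ?_ ?_ ?_
      · simp only [fac_add, fac_single]; exact hsum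
      · rw [gdegE_add, gdegE_single, gdegE_single]; omega
      · rw [gdegE_add, gdegE_single, gdegE_single]; omega
    have hlt : ∑ i, (((u' : ↥(BlockT g)) : Fin m → ℕ) i - ((v : ↥(BlockT g)) : Fin m → ℕ) i) < N := by
      rw [← hN]
      refine Finset.sum_lt_sum (fun i _ => ?_) ⟨p, Finset.mem_univ _, ?_⟩
      · have h1 := congrFun hu'e i
        simp only [Pi.add_apply, Pi.single_apply] at h1
        by_cases hiq : i = q
        · subst hiq
          simp [hpne.symm] at h1
          omega
        · simp only [hiq, if_false] at h1
          omega
      · have h1 := congrFun hu'e p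
        simp [hpne] at h1
        omega
    obtain ⟨β, hβ, hβ'⟩ := ih _ hlt u' (Finsupp.single b' 1 + α') (hu'.trans huv) (by
      rw [← ht, fac_add, fac_add, fac_single, fac_single, ← add_assoc, ← add_assoc, hsum]) rfl
    refine ⟨β, Relation.ReflTransGen.head ?_ hβ, ?_⟩
    · convert hstep using 1 <;> abel
    · rw [hβ', pushF_add, pushF_add, pushF_single, pushF_single, hb']

/-- Factorizations of the same element with the same image are connected by swaps. -/
lemma conn_of_pushF_eq {d M : ℕ} (hM : ∀ a : ↥(Atoms ↥(BlockT g)), wT g a ≤ M) (hd : 2 * M ≤ d)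
    (α γ : FreeExp ↥(BlockT g)) (hfac : fac α = fac γ) (hpush : pushF g α = pushF g γ) :
    Conn (wT g) d α γ := by
  induction hN : degE γ using Nat.strong_induction_on generalizing α γ with
  | _ N ih =>
    have hdeg : degE α = degE γ := by
      have := congrArg degE hpush
      rwa [pushF, pushF, degE_mapDomain, degE_mapDomain] at this
    by_cases hγ : γ = 0
    · subst hγ
      rw [degE_eq_zero.2 rfl, degE_eq_zero] at hdeg
      rw [hdeg]
    obtain ⟨v, hv⟩ := exists_ne_of_ne_zero hγ
    obtain ⟨γ', rfl⟩ := exists_single_add γ hv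
    obtain ⟨u, hu, huv⟩ := exists_of_mapDomain_ne_zero (pushA g) (α := α) (t := pushA g v) (by
      change pushF g α _ ≠ 0
      rw [hpush, pushF_add, pushF_single]
      simp)
    obtain ⟨α', rfl⟩ := exists_single_add α hu
    rw [fac_add, fac_add, fac_single, fac_single] at hfac
    obtain ⟨β, hβ, hβ'⟩ := exists_conn_atom g hM hd v u α' huv (fac γ') hfac
    have h1 := hβ.fac_eq
    rw [fac_add, fac_add, fac_single, fac_single, hfac] at h1
    rw [pushF_add, pushF_add, pushF_single, pushF_single, huv] at hpush
    rw [degE_add, degE_single] at hN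
    exact hβ.trans (Conn.add_left _ (ih (degE γ') (by omega) β γ'
      (blockT_add_left_cancel g h1).symm (hβ'.trans (add_left_cancel hpush)) rfl))

end transfer

/-! ### The two bounds -/

/-- Theorem 6.2 (i): with `ℬ(g)` and `ℬ(supp g)` graded by total degree,
`c_gr(ℬ(g)) ≤ max (2|a₁|) (c_gr(ℬ(supp g)))` and
`c_gr(ℬ(supp g)) ≤ Σ_{i=1}^{min(n,r+1)} |a_i| - r`. -/
theorem graded_catenary_bounds (G : Type) [CommGroup G] (m : ℕ) (g : Fin m → G)
    (n : ℕ) (hn : 0 < n) (e : Fin n ≃ ↥(Atoms ↥(BlockS (Set.range g))))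
    (hsort : ∀ i j : Fin n, i ≤ j →
      degE (((e j : ↥(BlockS (Set.range g))) : ↥(Set.range g) →₀ ℕ)) ≤
        degE (((e i : ↥(BlockS (Set.range g))) : ↥(Set.range g) →₀ ℕ)))
    (r : ℕ)
    (hr : r = Module.finrank ℤ ↥(Submodule.span ℤ
      ((fun α : ↥(Set.range g) →₀ ℕ =>
        Finsupp.mapRange (Nat.cast : ℕ → ℤ) Nat.cast_zero α) ''
        ((BlockS (Set.range g) : Set (↥(Set.range g) →₀ ℕ)))))) :
    catDegGr ↥(BlockT g) (fun α => ∑ i, (α : Fin m → ℕ) i) ≤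
      max (2 * degE (((e ⟨0, hn⟩ : ↥(BlockS (Set.range g))) : ↥(Set.range g) →₀ ℕ)))
        (catDegGr ↥(BlockS (Set.range g)) (fun α => degE (α : ↥(Set.range g) →₀ ℕ))) ∧
    catDegGr ↥(BlockS (Set.range g)) (fun α => degE (α : ↥(Set.range g) →₀ ℕ)) ≤
      (∑ i : Fin (min n (r + 1)),
        degE (((e (Fin.castLE (min_le_left n (r + 1)) i) : ↥(BlockS (Set.range g))) :
          ↥(Set.range g) →₀ ℕ))) - r := by
  classical
  have : Fintype ↥(Set.range g) := Set.fintypeRange g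
  have : Fintype ↥(Atoms ↥(BlockS (Set.range g))) := Fintype.ofEquiv _ e
  set f : Fin n → ℕ := fun i => degE (((e i : ↥(BlockS (Set.range g))) : ↥(Set.range g) →₀ ℕ))
    with hf
  have hpos : ∀ i, 1 ≤ f i := fun i => wS_atom_pos (e i)
  set D := (∑ i : Fin (min n (r + 1)), f (Fin.castLE (min_le_left n (r + 1)) i)) - r with hD
  have hS : ∀ α γ : FreeExp ↥(BlockS (Set.range g)), fac α = fac γ →
      Conn (wS (Set.range g)) D α γ := by
    rcases Nat.lt_or_ge r n with hrn | hrn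
    · intro α γ hαγ
      have hmin : min n (r + 1) = r + 1 := min_eq_right hrn
      refine blockS_conn r D hr (fun U hU => ?_) α γ hαγ
      have h1 := sum_le_sum_initial f hsort hpos (min n (r + 1)) (min_le_left _ _)
        (U.map e.symm.toEmbedding) (by rw [Finset.card_map]; omega)
      rw [Finset.card_map, Finset.sum_map] at h1
      have h2 : ∑ x ∈ U, f (e.symm.toEmbedding x) = ∑ x ∈ U, wS (Set.range g) x :=
        Finset.sum_congr rfl fun x _ => by simp [hf]
      omega
    -- For `n ≤ r` the sum on the right is not the one `blockS_conn` needs, but then there is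
    -- nothing to connect.
    · intro α γ hαγ
      rw [fac_injective_of_card_le (by
        rw [← hr, ← Fintype.card_congr e, Fintype.card_fin]; exact hrn) α γ hαγ]
  refine ⟨catDegGr_le (w := wT g) fun α γ hαγ => ?_, catDegGr_le hS⟩
  have hM : ∀ a : ↥(Atoms ↥(BlockT g)), wT g a ≤ f ⟨0, hn⟩ := by
    intro a
    rw [← wS_pushB]
    have := hsort ⟨0, hn⟩ (e.symm (pushA g a)) (Nat.zero_le _)
    rw [Equiv.apply_symm_apply] at this
    exact this
  have hmono : ∀ {d d' : ℕ}, d ≤ d' → ∀ {x y : FreeExp ↥(BlockT g)},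
      Conn (wT g) d x y → Conn (wT g) d' x y := fun hdd' _ _ h =>
    Relation.ReflTransGen.mono (fun _ _ hs => ⟨hs.1, hs.2.trans hdd'⟩) _ _ h
  -- Lift a chain between the images, then correct its end point `β` to `γ` inside the fibre.
  obtain ⟨β, hβ, hc⟩ := exists_lift_conn g α (pushF g γ)
    (conn_catDegGr hS _ _ (by rw [fac_pushF, fac_pushF, hαγ]))
  exact (hmono (le_max_right _ _) hc).trans
    (conn_of_pushF_eq g hM (le_max_left _ _) β γ (hc.fac_eq.symm.trans hαγ) hβ)
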